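/- arXiv:2007.07876 — 6 statements merged into one kernel-verified Lean document; each statement's English description precedes it below -/
import Mathlib

section
/- Consider an admissible non-randomized contextual bandit algorithm that selects a policy π_t determined measurably by the history H_{t−1} and plays a_t = π_t(x_t) at each round, and that plays each of the K actions exactly once during the first K rounds (π_t ≡ t for t ≤ K). Then for every δ ∈ (0,1), with probability at least 1 − δ/2, simultaneously for all t > K and all policies π : X → A: |E_x[f̂_t(x,π(x))] − E_x[f*(x,π(x))]| ≤ √( E_x[ 1 / Σ_{i=1}^{t−1} 1{π(x) = π_i(x)} ] ) · √( 68 log(2|F| t³/δ) ). -/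
/-!
For `f ∈ F` put `g = f - f*` and let
`Y_i = (f(x_i,a_i) - r_i)² - (f*(x_i,a_i) - r_i)² = g(x_i,a_i)² + 2 g(x_i,a_i) (f*(x_i,a_i) - r_i)`
be the excess squared loss at round `i`, and `v_i = E_x[g(x, π_i(x))²]`, which is determined by
`H_{i-1}`. Since `Y_i / 8` has absolute value at most one and `Y_i² ≤ 4 g²`, the inequality `exp z ≤ 1 + z + z²` for `|z| ≤ 1`
gives `exp (-Y_i / 8) ≤ 1 - g² / 16 - g (f* - r_i) / 4`. The last term has conditional mean zero
(`integral_exp_step_le`), and as `x_i` is independent of `H_{i-1}` the conditional mean of the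
middle term is `-v_i / 16` (`integral_indep_eq`). Hence
`Z_n = exp (∑_{i ≤ n} (v_i / 16 - Y_i / 8))` has expectation at most one (`integral_expProc_le`).

By Markov's inequality and a union bound over `f ∈ F` and `t ≥ 2` with failure probabilities
`δ / (2 |F| t³)`, outside an event of probability at most `δ / 2` all the `Z_{t-1}` stay below
`2 |F| t³ / δ`. For `f = f̂_t` least squares gives `∑ Y_i ≤ 0`, whence
`∑_{i<t} v_i ≤ 16 log (2 |F| t³ / δ)`. Finally, with `N(x) = ∑_{i<t} 1{π(x) = π_i(x)} ≥ 1`,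
Cauchy–Schwarz gives `|E_x[g(x,π(x))]| ≤ √E_x[1 / N] √E_x[N g(x,π(x))²]`, and
`N(x) g(x,π(x))² ≤ ∑_{i<t} g(x,π_i(x))²` pointwise (`abs_integral_le_of_count`).
-/

open MeasureTheory ProbabilityTheory

/-- The history σ-algebra `H_t` generated by `(x_i, a_i, r_i)` for `1 ≤ i ≤ t`. -/
noncomputable def histFilt {Ω X : Type*} [MeasurableSpace X]
    (x : ℕ → Ω → X) (a : ℕ → Ω → ℕ) (r : ℕ → Ω → ℝ) (t : ℕ) :
    MeasurableSpace Ω :=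
  ⨆ i ∈ Finset.Icc 1 t,
    MeasurableSpace.comap (fun ω => (x i ω, a i ω, r i ω)) inferInstance

/-! ### Integration lemmas for a single round -/

/-- Freezing: an independent argument may be integrated out separately. -/
lemma integral_indep_eq {Ω Ω' X : Type*} {mΩ : MeasurableSpace Ω} [MeasurableSpace Ω']
    [MeasurableSpace X] (P : Measure Ω) [IsProbabilityMeasure P] (Dx : Measure X)
    [IsProbabilityMeasure Dx] (U : Ω → Ω') (x : Ω → X) (hU : Measurable U) (hx : Measurable x)
    (hlaw : P.map x = Dx) (hind : IndepFun U x P) (G : Ω' × X → ℝ) (hG : Measurable G)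
    (C : ℝ) (hC : ∀ q, |G q| ≤ C) :
    ∫ ω, G (U ω, x ω) ∂P = ∫ ω, ∫ x', G (U ω, x') ∂Dx ∂P := by
  have h1 := (indepFun_iff_map_prod_eq_prod_map_map hU.aemeasurable hx.aemeasurable).1 hind
  rw [hlaw] at h1
  have : IsProbabilityMeasure (P.map U) := Measure.isProbabilityMeasure_map hU.aemeasurable
  rw [← integral_map (φ := fun ω => (U ω, x ω)) (f := G) (hU.prodMk hx).aemeasurable
    hG.aestronglyMeasurable, h1, integral_prod]
  · rw [integral_map hU.aemeasurable]
    exact (hG.stronglyMeasurable.integral_prod_right').aestronglyMeasurable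
  · exact Integrable.of_bound hG.aestronglyMeasurable C (Filter.Eventually.of_forall hC)

lemma measurable_integral_right {Ω X : Type*} [MeasurableSpace Ω]
    [MeasurableSpace X] (Dx : Measure X) [IsProbabilityMeasure Dx] (G : Ω × X → ℝ)
    (hG : Measurable G) : Measurable (fun ω => ∫ x', G (ω, x') ∂Dx) :=
  (hG.stronglyMeasurable.integral_prod_right').measurable

/-- One step of the exponential process, before the context is integrated out. By
`exp z ≤ 1 + z + z²` for `|z| ≤ 1` the integrand is at most
`W * (1 - g² / 16) - W * g * (s - r) / 4`;
the noise term `W * g * (s - r)` integrates to zero because `s` is the conditional mean of `r`. -/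
lemma integral_exp_step_le {Ω : Type*} (n : MeasurableSpace Ω) {mΩ : MeasurableSpace Ω}
    (P : Measure Ω) [IsProbabilityMeasure P] (hn : n ≤ mΩ)
    (W g r s : Ω → ℝ) (hW : Measurable[n] W) (hg : Measurable[n] g) (hr : Measurable r)
    (hs : Measurable s) (C : ℝ) (hW0 : ∀ ω, 0 ≤ W ω) (hWC : ∀ ω, W ω ≤ C)
    (hg1 : ∀ ω, |g ω| ≤ 1) (hr1 : ∀ ω, r ω ∈ Set.Icc (0 : ℝ) 1)
    (hs1 : ∀ ω, s ω ∈ Set.Icc (0 : ℝ) 1)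
    (hY : ∀ ω, |g ω + 2 * (s ω - r ω)| ≤ 2)
    (hcond : P[r | n] =ᵐ[P] s) :
    ∫ ω, W ω * Real.exp (-(g ω ^ 2 + 2 * g ω * (s ω - r ω)) / 8) ∂P
      ≤ ∫ ω, W ω * (1 - g ω ^ 2 / 16) ∂P := by
  have hW' : Measurable W := hW.mono hn le_rfl
  have hg' : Measurable g := hg.mono hn le_rfl
  have ir : Integrable r P := Integrable.of_bound hr.aestronglyMeasurable 1
    (Filter.Eventually.of_forall fun ω => by
      rw [Real.norm_eq_abs, abs_of_nonneg (hr1 ω).1]; exact (hr1 ω).2)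
  have hWg : ∀ ω, |W ω * g ω| ≤ C := fun ω => by
    rw [abs_mul, abs_of_nonneg (hW0 ω)]
    nlinarith [hg1 ω, hW0 ω, hWC ω, abs_nonneg (g ω)]
  have iWgr : Integrable (fun ω => W ω * g ω * r ω) P :=
    ir.bdd_mul (c := C) (hW'.mul hg').aestronglyMeasurable (Filter.Eventually.of_forall hWg)
  have is : Integrable s P := Integrable.of_bound hs.aestronglyMeasurable 1
    (Filter.Eventually.of_forall fun ω => by
      rw [Real.norm_eq_abs, abs_of_nonneg (hs1 ω).1]; exact (hs1 ω).2)
  have iWgs : Integrable (fun ω => W ω * g ω * s ω) P :=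
    is.bdd_mul (c := C) (hW'.mul hg').aestronglyMeasurable (Filter.Eventually.of_forall hWg)
  have e1 : ∫ ω, W ω * g ω * r ω ∂P = ∫ ω, W ω * g ω * s ω ∂P := by
    have h := condExp_mul_of_stronglyMeasurable_left (μ := P) (m := n)
      (f := fun ω => W ω * g ω) (g := r) (hW.mul hg).stronglyMeasurable iWgr ir
    calc ∫ ω, W ω * g ω * r ω ∂P
        = ∫ ω, (P[(fun ω => W ω * g ω) * r | n]) ω ∂P := (integral_condExp hn).symm
      _ = _ := by
        apply integral_congr_ae
        filter_upwards [h, hcond] with ω h1 h2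
        rw [h1, Pi.mul_apply, h2]
  have iWg2 : Integrable (fun ω => W ω * (1 - g ω ^ 2 / 16)) P :=
    Integrable.of_bound (by fun_prop) C (Filter.Eventually.of_forall fun ω => by
      have : g ω ^ 2 ≤ 1 := (sq_le_one_iff_abs_le_one _).2 (hg1 ω)
      rw [Real.norm_eq_abs, abs_of_nonneg (mul_nonneg (hW0 ω) (by linarith))]
      nlinarith [hW0 ω, hWC ω, sq_nonneg (g ω)])
  have iB : Integrable (fun ω => (W ω * g ω * s ω - W ω * g ω * r ω) / 4) P :=
    (iWgs.sub iWgr).div_const 4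
  calc ∫ ω, W ω * Real.exp (-(g ω ^ 2 + 2 * g ω * (s ω - r ω)) / 8) ∂P
      ≤ ∫ ω, (W ω * (1 - g ω ^ 2 / 16) - (W ω * g ω * s ω - W ω * g ω * r ω) / 4) ∂P := by
        apply integral_mono_of_nonneg
          (Filter.Eventually.of_forall fun ω => mul_nonneg (hW0 ω) (Real.exp_pos _).le)
          (iWg2.sub iB)
        refine Filter.Eventually.of_forall fun ω => ?_
        set Y := g ω ^ 2 + 2 * g ω * (s ω - r ω) with hYdef
        have hY1 : (g ω + 2 * (s ω - r ω)) ^ 2 ≤ 2 ^ 2 := sq_le_sq' (abs_le.1 (hY ω)).1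
          (abs_le.1 (hY ω)).2
        have h2 : Y ^ 2 ≤ 4 * g ω ^ 2 := by
          have : Y ^ 2 = g ω ^ 2 * (g ω + 2 * (s ω - r ω)) ^ 2 := by rw [hYdef]; ring
          rw [this]; nlinarith [sq_nonneg (g ω)]
        have h3 : g ω ^ 2 ≤ 1 := (sq_le_one_iff_abs_le_one _).2 (hg1 ω)
        have hz : |-Y / 8| ≤ 1 := (sq_le_one_iff_abs_le_one _).1 (by nlinarith)
        have h1 := (abs_le.1 (Real.abs_exp_sub_one_sub_id_le hz)).2
        have : Real.exp (-Y / 8) ≤ 1 - g ω ^ 2 / 16 - g ω * (s ω - r ω) / 4 := by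
          nlinarith
        calc W ω * Real.exp (-Y / 8) ≤ W ω * (1 - g ω ^ 2 / 16 - g ω * (s ω - r ω) / 4) :=
              mul_le_mul_of_nonneg_left this (hW0 ω)
          _ = _ := by simp only [Pi.sub_apply]; ring
    _ = _ := by
        rw [integral_sub iWg2 iB, integral_div, integral_sub iWgs iWgr, e1]; ring

/-! ### The exponential process -/

/-- The excess squared loss of `f` over `fstar` at round `i`. -/
noncomputable def excessLoss {Ω X : Type*} (f fstar : X → ℕ → ℝ)
    (x : ℕ → Ω → X) (a : ℕ → Ω → ℕ) (r : ℕ → Ω → ℝ) (i : ℕ) (ω : Ω) : ℝ :=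
  (f (x i ω) (a i ω) - r i ω) ^ 2 - (fstar (x i ω) (a i ω) - r i ω) ^ 2

/-- The mean squared distance of `f` and `fstar` along the policy played at round `i`. Under
realizability it is the conditional expectation of the excess loss given the history `H_{i-1}`. -/
noncomputable def meanSqDist {Ω X : Type*} [MeasurableSpace X] (Dx : Measure X)
    (f fstar : X → ℕ → ℝ) (p : ℕ → Ω → X → ℕ) (i : ℕ) (ω : Ω) : ℝ :=
  ∫ x', (f x' (p i ω x') - fstar x' (p i ω x')) ^ 2 ∂Dx

/-- The exponential process `exp (∑_{i ≤ n} (v_i / 16 - Y_i / 8))`, with `v_i` the mean squared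
distance and `Y_i` the excess loss. -/
noncomputable def expProc {Ω X : Type*} [MeasurableSpace X] (Dx : Measure X)
    (f fstar : X → ℕ → ℝ) (x : ℕ → Ω → X) (a : ℕ → Ω → ℕ) (r : ℕ → Ω → ℝ)
    (p : ℕ → Ω → X → ℕ) (n : ℕ) (ω : Ω) : ℝ :=
  Real.exp (∑ i ∈ Finset.Icc 1 n,
    (meanSqDist Dx f fstar p i ω / 16 - excessLoss f fstar x a r i ω / 8))

lemma measurable_uncurry_nat {X : Type*} [MeasurableSpace X] {f : X → ℕ → ℝ}
    (hf : ∀ k, Measurable (fun x' => f x' k)) : Measurable (fun q : X × ℕ => f q.1 q.2) :=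
  measurable_from_prod_countable_left hf

lemma histFilt_mono {Ω X : Type*} [MeasurableSpace X]
    (x : ℕ → Ω → X) (a : ℕ → Ω → ℕ) (r : ℕ → Ω → ℝ) {s t : ℕ} (h : s ≤ t) :
    histFilt x a r s ≤ histFilt x a r t :=
  biSup_mono fun _ hi => Finset.Icc_subset_Icc_right h hi

lemma histFilt_le {Ω X : Type*} [mΩ : MeasurableSpace Ω] [MeasurableSpace X]
    {x : ℕ → Ω → X} {a : ℕ → Ω → ℕ} {r : ℕ → Ω → ℝ} (hx : ∀ t, Measurable (x t))
    (ha : ∀ t, Measurable (a t)) (hr : ∀ t, Measurable (r t)) (t : ℕ) :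
    histFilt x a r t ≤ mΩ :=
  iSup₂_le fun i _ => ((hx i).prodMk ((ha i).prodMk (hr i))).comap_le

lemma measurable_obs_histFilt {Ω X : Type*} [MeasurableSpace X]
    (x : ℕ → Ω → X) (a : ℕ → Ω → ℕ) (r : ℕ → Ω → ℝ) {i : ℕ} (hi : 1 ≤ i) :
    Measurable[histFilt x a r i] (fun ω => (x i ω, a i ω, r i ω)) :=
  Measurable.mono (comap_measurable _)
    (le_iSup₂_of_le i (Finset.mem_Icc.2 ⟨hi, le_rfl⟩) le_rfl) le_rfl

lemma measurable_meanSqDist {Ω X : Type*} [m : MeasurableSpace Ω] [MeasurableSpace X]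
    (Dx : Measure X) [IsProbabilityMeasure Dx] {f fstar : X → ℕ → ℝ}
    (hf : ∀ k, Measurable (fun x' => f x' k)) (hfs : ∀ k, Measurable (fun x' => fstar x' k))
    {p : ℕ → Ω → X → ℕ} {i : ℕ} (hp : Measurable (fun q : Ω × X => p i q.1 q.2)) :
    Measurable (fun ω => meanSqDist Dx f fstar p i ω) := by
  refine measurable_integral_right Dx
    (fun q : Ω × X => (f q.2 (p i q.1 q.2) - fstar q.2 (p i q.1 q.2)) ^ 2) ?_
  exact (((measurable_uncurry_nat hf).comp (measurable_snd.prodMk hp)).sub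
    ((measurable_uncurry_nat hfs).comp (measurable_snd.prodMk hp))).pow_const 2

lemma measurable_excessLoss {Ω X : Type*} [MeasurableSpace X] {f fstar : X → ℕ → ℝ}
    (hf : ∀ k, Measurable (fun x' => f x' k)) (hfs : ∀ k, Measurable (fun x' => fstar x' k))
    (x : ℕ → Ω → X) (a : ℕ → Ω → ℕ) (r : ℕ → Ω → ℝ) {i : ℕ} (hi : 1 ≤ i) :
    Measurable[histFilt x a r i] (fun ω => excessLoss f fstar x a r i ω) := by
  have h := measurable_obs_histFilt x a r hi
  have hG : Measurable (fun q : X × ℕ × ℝ =>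
      (f q.1 q.2.1 - q.2.2) ^ 2 - (fstar q.1 q.2.1 - q.2.2) ^ 2) := by
    have h1 := (measurable_uncurry_nat hf).comp
      (measurable_fst.prodMk (measurable_fst.comp measurable_snd) :
        Measurable fun q : X × ℕ × ℝ => (q.1, q.2.1))
    have h2 := (measurable_uncurry_nat hfs).comp
      (measurable_fst.prodMk (measurable_fst.comp measurable_snd) :
        Measurable fun q : X × ℕ × ℝ => (q.1, q.2.1))
    have h3 : Measurable fun q : X × ℕ × ℝ => q.2.2 := by fun_prop
    exact ((h1.sub h3).pow_const 2).sub ((h2.sub h3).pow_const 2)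
  exact hG.comp h

lemma sq_sub_le_one {u v : ℝ} (hu : u ∈ Set.Icc (0 : ℝ) 1) (hv : v ∈ Set.Icc (0 : ℝ) 1) :
    (u - v) ^ 2 ≤ 1 :=
  (sq_le_one_iff_abs_le_one _).2
    (abs_le.2 ⟨by linarith [hu.1, hv.2], by linarith [hu.2, hv.1]⟩)

section ExpProc

variable {Ω X : Type*} [MeasurableSpace X] {Dx : Measure X} [IsProbabilityMeasure Dx]
  {f fstar : X → ℕ → ℝ} {x : ℕ → Ω → X} {a : ℕ → Ω → ℕ} {r : ℕ → Ω → ℝ} {p : ℕ → Ω → X → ℕ}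

lemma meanSqDist_mem (hf1 : ∀ x' k, f x' k ∈ Set.Icc (0 : ℝ) 1)
    (hfs1 : ∀ x' k, fstar x' k ∈ Set.Icc (0 : ℝ) 1) (i : ℕ) (ω : Ω) :
    meanSqDist Dx f fstar p i ω ∈ Set.Icc (0 : ℝ) 1 := by
  refine ⟨integral_nonneg fun _ => sq_nonneg _, ?_⟩
  have h := integral_mono_of_nonneg (μ := Dx)
    (f := fun x' => (f x' (p i ω x') - fstar x' (p i ω x')) ^ 2) (g := fun _ => (1 : ℝ))
    (Filter.Eventually.of_forall fun _ => sq_nonneg _) (integrable_const _)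
    (Filter.Eventually.of_forall fun x' => sq_sub_le_one (hf1 _ _) (hfs1 _ _))
  simpa [meanSqDist] using h

lemma expProc_le (hf1 : ∀ x' k, f x' k ∈ Set.Icc (0 : ℝ) 1)
    (hfs1 : ∀ x' k, fstar x' k ∈ Set.Icc (0 : ℝ) 1)
    (hr1 : ∀ t ω, r t ω ∈ Set.Icc (0 : ℝ) 1) (n : ℕ) (ω : Ω) :
    expProc Dx f fstar x a r p n ω ≤ Real.exp n := by
  unfold expProc
  rw [Real.exp_le_exp]
  refine (Finset.sum_le_card_nsmul _ _ 1 fun i _ => ?_).trans (by simp)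
  have h1 := (meanSqDist_mem (Dx := Dx) (p := p) hf1 hfs1 i ω).2
  have h2 := sq_sub_le_one (hfs1 (x i ω) (a i ω)) (hr1 i ω)
  have h3 := sq_nonneg (f (x i ω) (a i ω) - r i ω)
  unfold excessLoss
  linarith

lemma measurable_expProc (hf : ∀ k, Measurable (fun x' => f x' k))
    (hfs : ∀ k, Measurable (fun x' => fstar x' k))
    (hp_meas : ∀ t, 1 ≤ t →
      Measurable[(histFilt x a r (t - 1)).prod inferInstance]
        (fun q : Ω × X => p t q.1 q.2)) (n : ℕ) :
    Measurable[histFilt x a r n] (fun ω => expProc Dx f fstar x a r p n ω) := by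
  refine Real.measurable_exp.comp (Finset.measurable_fun_sum _ fun i hi => ?_)
  obtain ⟨hi1, hin⟩ := Finset.mem_Icc.1 hi
  refine Measurable.sub (Measurable.div_const ?_ _) (Measurable.div_const ?_ _)
  · exact (measurable_meanSqDist (m := histFilt x a r (i - 1)) Dx hf hfs
      (hp_meas i hi1)).mono (histFilt_mono x a r (by omega)) le_rfl
  · exact (measurable_excessLoss hf hfs x a r hi1).mono (histFilt_mono x a r hin) le_rfl

/-- Inductively, integrating out the reward and then the context of the last round shows that the
expectation of the exponential process does not increase. -/
lemma integral_expProc_le [mΩ : MeasurableSpace Ω] {P : Measure Ω} [IsProbabilityMeasure P]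
    (hf : ∀ k, Measurable (fun x' => f x' k))
    (hfs : ∀ k, Measurable (fun x' => fstar x' k))
    (hf1 : ∀ x' k, f x' k ∈ Set.Icc (0 : ℝ) 1)
    (hfs1 : ∀ x' k, fstar x' k ∈ Set.Icc (0 : ℝ) 1)
    (hx_meas : ∀ t, Measurable (x t)) (ha_meas : ∀ t, Measurable (a t))
    (hr_meas : ∀ t, Measurable (r t)) (hr_range : ∀ t ω, r t ω ∈ Set.Icc (0 : ℝ) 1)
    (hx_law : ∀ t, 1 ≤ t → P.map (x t) = Dx)
    (hx_indep : ∀ t, 1 ≤ t →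
      Indep (MeasurableSpace.comap (x t) inferInstance) (histFilt x a r (t - 1)) P)
    (hmean : ∀ t, 1 ≤ t →
      P[r t | histFilt x a r (t - 1) ⊔ MeasurableSpace.comap (x t) inferInstance
          ⊔ MeasurableSpace.comap (a t) inferInstance]
        =ᵐ[P] fun ω => fstar (x t ω) (a t ω))
    (hp_meas : ∀ t, 1 ≤ t →
      Measurable[(histFilt x a r (t - 1)).prod inferInstance]
        (fun q : Ω × X => p t q.1 q.2))
    (hplay : ∀ t ω, 1 ≤ t → a t ω = p t ω (x t ω)) (n : ℕ) :
    ∫ ω, expProc Dx f fstar x a r p n ω ∂P ≤ 1 := by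
  induction n with
  | zero => simp [expProc]
  | succ n ih =>
    have hle := histFilt_le (mΩ := mΩ) hx_meas ha_meas hr_meas n
    set v : Ω → ℝ := fun ω => meanSqDist Dx f fstar p (n + 1) ω with hv
    set W : Ω → ℝ := fun ω => expProc Dx f fstar x a r p n ω * Real.exp (v ω / 16) with hWdef
    set s : Ω → ℝ := fun ω => fstar (x (n + 1) ω) (a (n + 1) ω) with hs
    set g : Ω → ℝ := fun ω => f (x (n + 1) ω) (a (n + 1) ω) - s ω with hg
    set N : MeasurableSpace Ω := histFilt x a r n ⊔
      MeasurableSpace.comap (x (n + 1)) inferInstance ⊔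
      MeasurableSpace.comap (a (n + 1)) inferInstance with hN
    have hNle : N ≤ mΩ := sup_le (sup_le hle (hx_meas _).comap_le) (ha_meas _).comap_le
    have hxN : Measurable[N] (x (n + 1)) :=
      (comap_measurable _).mono (le_sup_of_le_left le_sup_right) le_rfl
    have haN : Measurable[N] (a (n + 1)) :=
      (comap_measurable _).mono le_sup_right le_rfl
    have hsN : Measurable[N] s := (measurable_uncurry_nat hfs).comp (hxN.prodMk haN)
    have hgN : Measurable[N] g :=
      ((measurable_uncurry_nat hf).comp (hxN.prodMk haN)).sub hsN
    have hpn := hp_meas (n + 1) (by omega)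
    have hvH : Measurable[histFilt x a r n] v :=
      measurable_meanSqDist (m := histFilt x a r n) Dx hf hfs hpn
    have hWH : Measurable[histFilt x a r n] W :=
      (measurable_expProc hf hfs hp_meas n).mul
        (Real.measurable_exp.comp (hvH.div_const 16))
    have hv1 : ∀ ω, v ω ∈ Set.Icc (0 : ℝ) 1 := fun ω => meanSqDist_mem hf1 hfs1 _ ω
    have hZ0 : ∀ ω, 0 ≤ expProc Dx f fstar x a r p n ω := fun ω => (Real.exp_pos _).le
    have hW0 : ∀ ω, 0 ≤ W ω := fun ω => mul_nonneg (hZ0 ω) (Real.exp_pos _).le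
    have hWC : ∀ ω, W ω ≤ Real.exp n * Real.exp 1 := fun ω =>
      mul_le_mul (expProc_le hf1 hfs1 hr_range n ω)
        (Real.exp_le_exp.2 (by linarith [(hv1 ω).2])) (Real.exp_pos _).le (Real.exp_pos _).le
    have hs1 : ∀ ω, s ω ∈ Set.Icc (0 : ℝ) 1 := fun ω => hfs1 _ _
    have hstep := integral_exp_step_le N P hNle W g (r (n + 1)) s
      (hWH.mono (le_sup_of_le_left le_sup_left) le_rfl) hgN (hr_meas _) (hsN.mono hNle le_rfl)
      (Real.exp n * Real.exp 1) hW0 hWC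
      (fun ω => (sq_le_one_iff_abs_le_one _).1 (sq_sub_le_one (hf1 _ _) (hs1 ω)))
      (hr_range _) hs1
      (fun ω => by
        have h1 := hf1 (x (n + 1) ω) (a (n + 1) ω)
        have h2 := hs1 ω
        have h3 := hr_range (n + 1) ω
        simp only [hg]
        rw [abs_le]
        constructor <;> linarith [h1.1, h1.2, h2.1, h2.2, h3.1, h3.2])
      (hmean (n + 1) (by omega))
    have hZ : ∀ ω, expProc Dx f fstar x a r p (n + 1) ω
        = W ω * Real.exp (-(g ω ^ 2 + 2 * g ω * (s ω - r (n + 1) ω)) / 8) := fun ω => by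
      simp only [hWdef, expProc]
      rw [← Real.exp_add, ← Real.exp_add, Finset.sum_Icc_succ_top (by omega)]
      congr 1
      simp only [hg, hs, hv, excessLoss]
      ring
    -- integrate out the context `x (n + 1)`, which is independent of the history
    have hfreeze : ∫ ω, W ω * (1 - g ω ^ 2 / 16) ∂P = ∫ ω, W ω * (1 - v ω / 16) ∂P := by
      have hind : @IndepFun Ω Ω X mΩ (histFilt x a r n) _ id (x (n + 1)) P := by
        have := (hx_indep (n + 1) (by omega)).symm
        simpa [IndepFun_iff_Indep, MeasurableSpace.comap_id] using this
      have hD : Measurable[(histFilt x a r n).prod inferInstance] (fun q : Ω × X =>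
          (f q.2 (p (n + 1) q.1 q.2) - fstar q.2 (p (n + 1) q.1 q.2)) ^ 2) := by
        have hq := (@measurable_snd Ω X (histFilt x a r n) _).prodMk hpn
        exact (((measurable_uncurry_nat hf).comp hq).sub
          ((measurable_uncurry_nat hfs).comp hq)).pow_const 2
      have hG : Measurable[(histFilt x a r n).prod inferInstance] (fun q : Ω × X =>
          W q.1 * (1 -
            (f q.2 (p (n + 1) q.1 q.2) - fstar q.2 (p (n + 1) q.1 q.2)) ^ 2 / 16)) :=
        (hWH.comp (@measurable_fst Ω X (histFilt x a r n) _)).mul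
          (measurable_const.sub (hD.div_const 16))
      have h := @integral_indep_eq Ω Ω X mΩ (histFilt x a r n) _ P _ Dx _ id (x (n + 1))
        (measurable_id.mono hle le_rfl) (hx_meas _) (hx_law _ (by omega)) hind _ hG
        (Real.exp n * Real.exp 1) (fun q => by
          have h1 := sq_sub_le_one (hf1 q.2 (p (n + 1) q.1 q.2)) (hfs1 q.2 (p (n + 1) q.1 q.2))
          have h2 := sq_nonneg (f q.2 (p (n + 1) q.1 q.2) - fstar q.2 (p (n + 1) q.1 q.2))
          rw [abs_of_nonneg (mul_nonneg (hW0 _) (by linarith))]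
          exact (mul_le_of_le_one_right (hW0 _) (by linarith)).trans (hWC _))
      calc ∫ ω, W ω * (1 - g ω ^ 2 / 16) ∂P
          = ∫ ω, W (id ω) * (1 - (f (x (n + 1) ω) (p (n + 1) (id ω) (x (n + 1) ω))
              - fstar (x (n + 1) ω) (p (n + 1) (id ω) (x (n + 1) ω))) ^ 2 / 16) ∂P := by
            simp only [hg, hs, id, hplay (n + 1) _ (by omega : 1 ≤ n + 1)]
        _ = _ := h
        _ = ∫ ω, W ω * (1 - v ω / 16) ∂P := by
            congr 1
            ext ω
            have hi : Integrable (fun x' => (f x' (p (n + 1) ω x')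
                - fstar x' (p (n + 1) ω x')) ^ 2) Dx :=
              Integrable.of_bound
                (hD.comp (@measurable_prodMk_left Ω X (histFilt x a r n) _ ω)
                  ).aestronglyMeasurable 1
                (Filter.Eventually.of_forall fun x' => by
                  rw [Real.norm_eq_abs, abs_of_nonneg (sq_nonneg _)]
                  exact sq_sub_le_one (hf1 _ _) (hfs1 _ _))
            simp only [id]
            rw [integral_const_mul, integral_sub (integrable_const _) (hi.div_const 16),
              integral_div]
            simp [hv, meanSqDist]
    calc ∫ ω, expProc Dx f fstar x a r p (n + 1) ω ∂P
        = ∫ ω, W ω * Real.exp (-(g ω ^ 2 + 2 * g ω * (s ω - r (n + 1) ω)) / 8) ∂P := by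
          simp only [hZ]
      _ ≤ ∫ ω, W ω * (1 - v ω / 16) ∂P := hstep.trans hfreeze.le
      _ ≤ ∫ ω, expProc Dx f fstar x a r p n ω ∂P := by
          apply integral_mono_of_nonneg
          · exact Filter.Eventually.of_forall fun ω =>
              mul_nonneg (hW0 ω) (by linarith [(hv1 ω).2])
          · exact Integrable.of_bound
              ((measurable_expProc hf hfs hp_meas n).mono hle le_rfl).aestronglyMeasurable
              (Real.exp n) (Filter.Eventually.of_forall fun ω => by
                rw [Real.norm_eq_abs, abs_of_nonneg (hZ0 ω)]
                exact expProc_le hf1 hfs1 hr_range n ω)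
          · refine Filter.Eventually.of_forall fun ω => ?_
            have h1 : 1 - v ω / 16 ≤ Real.exp (-(v ω / 16)) := by
              linarith [Real.add_one_le_exp (-(v ω / 16))]
            calc W ω * (1 - v ω / 16) ≤ W ω * Real.exp (-(v ω / 16)) :=
                  mul_le_mul_of_nonneg_left h1 (hW0 ω)
              _ = expProc Dx f fstar x a r p n ω := by
                  simp only [hWdef]
                  rw [mul_assoc, ← Real.exp_add]; simp
      _ ≤ 1 := ih

end ExpProc

/-! ### Transfer to an arbitrary policy, and the union bound -/

/-- Cauchy–Schwarz with weight `N x' = #{i ∈ I | π x' = q i x'}`: the prediction error along `π`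
is controlled by the mean squared errors along the policies `q i`, at the price `E[1 / N]`. -/
lemma abs_integral_le_of_count {X : Type*} [MeasurableSpace X] (Dx : Measure X)
    [IsProbabilityMeasure Dx] (I : Finset ℕ) (q : ℕ → X → ℕ) (hq : ∀ i ∈ I, Measurable (q i))
    (π : X → ℕ) (hπ : Measurable π) (h : X → ℕ → ℝ) (hh : ∀ k, Measurable (fun x' => h x' k))
    (hh1 : ∀ x' k, h x' k ^ 2 ≤ 1) (hN : ∀ x', ∃ i ∈ I, π x' = q i x') :
    |∫ x', h x' (π x') ∂Dx| ≤
      Real.sqrt (∫ x', (1 : ℝ) / ((I.filter (fun i => π x' = q i x')).card : ℝ) ∂Dx)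
        * Real.sqrt (∑ i ∈ I, ∫ x', h x' (q i x') ^ 2 ∂Dx) := by
  set N : X → ℝ := fun x' => ((I.filter (fun i => π x' = q i x')).card : ℝ) with hNdef
  have hN1 : ∀ x', 1 ≤ N x' := fun x' => by
    obtain ⟨i, hi, hiq⟩ := hN x'
    simp only [hNdef]
    exact_mod_cast Finset.card_pos.2 ⟨i, Finset.mem_filter.2 ⟨hi, hiq⟩⟩
  have hNsum : ∀ x', N x' = ∑ i ∈ I, if π x' = q i x' then (1 : ℝ) else 0 := fun x' => by
    simp [hNdef]
  have hNC : ∀ x', N x' ≤ I.card := fun x' => by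
    simp only [hNdef]
    exact_mod_cast Finset.card_filter_le _ _
  have hNm : Measurable N := by
    rw [show N = _ from funext hNsum]
    exact Finset.measurable_fun_sum _ fun i hi =>
      Measurable.ite (measurableSet_eq_fun hπ (hq i hi)) measurable_const measurable_const
  have hcomp : ∀ {ρ : X → ℕ}, Measurable ρ → Measurable (fun x' => h x' (ρ x')) :=
    fun hρ => (measurable_uncurry_nat hh).comp (measurable_id.prodMk hρ)
  have hhπ := hcomp hπ
  set u : X → ℝ := fun x' => 1 / Real.sqrt (N x') with hu
  set w : X → ℝ := fun x' => Real.sqrt (N x') * |h x' (π x')| with hw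
  have hsN : ∀ x', 0 < Real.sqrt (N x') := fun x' => Real.sqrt_pos.2 (by linarith [hN1 x'])
  have hu0 : ∀ x', 0 ≤ u x' := fun x' => by positivity
  have hw0 : ∀ x', 0 ≤ w x' := fun x' => by positivity
  have hum : Measurable u := measurable_const.div hNm.sqrt
  have hwm : Measurable w := hNm.sqrt.mul hhπ.abs
  have hu2 : ∀ x', u x' ^ 2 = 1 / N x' := fun x' => by
    simp only [hu]; rw [div_pow, Real.sq_sqrt (by linarith [hN1 x']), one_pow]
  have hw2 : ∀ x', w x' ^ 2 = N x' * h x' (π x') ^ 2 := fun x' => by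
    simp only [hw]; rw [mul_pow, Real.sq_sqrt (by linarith [hN1 x']), sq_abs]
  have huC : ∀ x', u x' ≤ 1 := fun x' => by
    have : u x' ^ 2 ≤ 1 := by rw [hu2]; exact (div_le_one (by linarith [hN1 x'])).2 (hN1 x')
    nlinarith [hu0 x']
  have hwC : ∀ x', w x' ≤ I.card := fun x' => by
    have h2 : w x' ^ 2 ≤ I.card := by
      rw [hw2]; nlinarith [hN1 x', hNC x', hh1 x' (π x')]
    nlinarith [hw0 x', hN1 x', hNC x']
  have bound : ∀ {φ : X → ℝ} {C : ℝ}, (∀ x', 0 ≤ φ x') → (∀ x', φ x' ≤ C) →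
      ∀ᵐ x' ∂Dx, ‖φ x'‖ ≤ C := fun h0 hC => Filter.Eventually.of_forall fun x' => by
    rw [Real.norm_eq_abs, abs_of_nonneg (h0 x')]; exact hC x'
  have huL : MemLp u (ENNReal.ofReal 2) Dx :=
    MemLp.of_bound hum.aestronglyMeasurable 1 (bound hu0 huC)
  have hwL : MemLp w (ENNReal.ofReal 2) Dx :=
    MemLp.of_bound hwm.aestronglyMeasurable _ (bound hw0 hwC)
  have hCS := integral_mul_le_Lp_mul_Lq_of_nonneg (μ := Dx) Real.HolderConjugate.two_two
    (Filter.Eventually.of_forall hu0) (Filter.Eventually.of_forall hw0) huL hwL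
  simp only [Real.rpow_two, ← Real.sqrt_eq_rpow] at hCS
  have hiq : ∀ i ∈ I, Integrable (fun x' => h x' (q i x') ^ 2) Dx := fun i hi =>
    Integrable.of_bound ((hcomp (hq i hi)).pow_const 2).aestronglyMeasurable 1
      (bound (fun _ => sq_nonneg _) fun _ => hh1 _ _)
  have hw_int : ∫ x', w x' ^ 2 ∂Dx ≤ ∑ i ∈ I, ∫ x', h x' (q i x') ^ 2 ∂Dx := by
    rw [← integral_finsetSum _ hiq]
    refine integral_mono_of_nonneg (Filter.Eventually.of_forall fun _ => sq_nonneg _)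
      (integrable_finsetSum _ hiq) (Filter.Eventually.of_forall fun x' => ?_)
    change w x' ^ 2 ≤ ∑ i ∈ I, h x' (q i x') ^ 2
    rw [hw2, hNsum, Finset.sum_mul]
    refine Finset.sum_le_sum fun i _ => ?_
    split_ifs with hc
    · rw [hc, one_mul]
    · rw [zero_mul]; exact sq_nonneg _
  calc |∫ x', h x' (π x') ∂Dx| ≤ ∫ x', |h x' (π x')| ∂Dx := abs_integral_le_integral_abs
    _ = ∫ x', u x' * w x' ∂Dx := by
        congr 1; ext x'
        simp only [hu, hw]
        field_simp [(hsN x').ne']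
    _ ≤ _ := hCS
    _ ≤ _ := by
        simp only [hu2]
        exact mul_le_mul_of_nonneg_left (Real.sqrt_le_sqrt hw_int) (Real.sqrt_nonneg _)

/-- The sum of `1 / t³` over the rounds `t ≥ 2` is at most one, by comparison with the telescoping
series `∑ 1 / (t (t - 1))`. -/
lemma tsum_inv_cube_le : ∑' n : ℕ, ENNReal.ofReal (1 / ((n : ℝ) + 2) ^ 3) ≤ 1 := by
  refine ENNReal.tsum_le_of_sum_range_le fun m => ?_
  rw [← ENNReal.ofReal_sum_of_nonneg fun i _ => by positivity, ENNReal.ofReal_le_one]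
  have h : ∀ m : ℕ, ∑ i ∈ Finset.range m, 1 / ((i : ℝ) + 2) ^ 3 ≤ 1 - 1 / ((m : ℝ) + 1) := by
    intro m
    induction m with
    | zero => simp
    | succ m ih =>
      rw [Finset.sum_range_succ]
      have h1 : 1 / ((m : ℝ) + 2) ^ 3 ≤ 1 / ((m : ℝ) + 1) - 1 / ((m : ℝ) + 2) := by
        have : 1 / ((m : ℝ) + 1) - 1 / ((m : ℝ) + 2) = 1 / (((m : ℝ) + 1) * (m + 2)) := by
          field_simp; ring
        rw [this]
        apply one_div_le_one_div_of_le (by positivity)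
        have hm : (0 : ℝ) ≤ m := Nat.cast_nonneg m
        nlinarith [mul_nonneg hm hm, mul_nonneg hm (mul_nonneg hm hm)]
      push_cast
      rw [show (m : ℝ) + 1 + 1 = m + 2 by ring]
      linarith
  have := h m
  have h2 : 0 ≤ 1 / ((m : ℝ) + 1) := by positivity
  linarith

/-- **Confidence of policies.**
Consider an admissible non-randomized contextual bandit algorithm that at each round `t`
selects a policy `π_t` measurably from the history `H_{t-1}` and plays `a_t = π_t(x_t)`,
and plays each of the `K` actions once during the first `K` rounds (`π_t ≡ t` for `t ≤ K`).
Then for every `δ ∈ (0,1)`, with probability at least `1 - δ/2`, simultaneously for all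
`t > K` and all policies `π : X → {1,...,K}`:
`|E_x[f̂_t(x, π(x))] - E_x[f*(x, π(x))]|
   ≤ √(E_x[1 / ∑_{i=1}^{t-1} 1{π(x) = π_i(x)}]) · √(68 log(2|F| t³/δ))`. -/
theorem stmt_1
    {Ω X : Type*} [MeasurableSpace Ω] [MeasurableSpace X]
    (P : Measure Ω) [IsProbabilityMeasure P]
    (Dx : Measure X) [IsProbabilityMeasure Dx]
    (K : ℕ) (hK : 1 ≤ K)
    -- finite function class, realizability
    (F : Finset (X → ℕ → ℝ))
    (hFmeas : ∀ f ∈ F, ∀ k, Measurable (fun x' => f x' k))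
    (hFrange : ∀ f ∈ F, ∀ x' k, f x' k ∈ Set.Icc (0 : ℝ) 1)
    (fstar : X → ℕ → ℝ) (hfstar : fstar ∈ F)
    -- the stochastic processes of contexts, actions and observed rewards
    (x : ℕ → Ω → X) (a : ℕ → Ω → ℕ) (r : ℕ → Ω → ℝ)
    (hx_meas : ∀ t, Measurable (x t))
    (ha_meas : ∀ t, Measurable (a t))
    (hr_meas : ∀ t, Measurable (r t))
    (hr_range : ∀ t ω, r t ω ∈ Set.Icc (0 : ℝ) 1)
    -- contexts are i.i.d. with law `Dx`, each independent of the past history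
    (hx_law : ∀ t, 1 ≤ t → P.map (x t) = Dx)
    (hx_indep : ∀ t, 1 ≤ t →
      Indep (MeasurableSpace.comap (x t) inferInstance) (histFilt x a r (t - 1)) P)
    -- realizability
    (hmean : ∀ t, 1 ≤ t →
      P[r t | histFilt x a r (t - 1) ⊔ MeasurableSpace.comap (x t) inferInstance
          ⊔ MeasurableSpace.comap (a t) inferInstance]
        =ᵐ[P] fun ω => fstar (x t ω) (a t ω))
    -- non-randomized algorithm: the policy `p t` is a jointly measurable function of the
    -- history `H_{t-1}` and of the context, and the played action is `a_t = π_t(x_t)`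
    (p : ℕ → Ω → X → ℕ)
    (hp_meas : ∀ t, 1 ≤ t →
      Measurable[(histFilt x a r (t - 1)).prod inferInstance]
        (fun q : Ω × X => p t q.1 q.2))
    (hp_range : ∀ t ω x', 1 ≤ t → p t ω x' ∈ Finset.Icc 1 K)
    (hp_init : ∀ t ω x', 1 ≤ t → t ≤ K → p t ω x' = t)
    (hplay : ∀ t ω, 1 ≤ t → a t ω = p t ω (x t ω))
    -- least squares oracle
    (fhat : ℕ → Ω → (X → ℕ → ℝ))
    (hfhat_mem : ∀ t ω, fhat t ω ∈ F)
    (hfhat_ls : ∀ t ω, ∀ f ∈ F,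
      ∑ i ∈ Finset.Icc 1 (t - 1), (fhat t ω (x i ω) (a i ω) - r i ω) ^ 2
        ≤ ∑ i ∈ Finset.Icc 1 (t - 1), (f (x i ω) (a i ω) - r i ω) ^ 2)
    (δ : ℝ) (hδ : δ ∈ Set.Ioo (0 : ℝ) 1) :
    ENNReal.ofReal (1 - δ / 2) ≤
      P {ω | ∀ t : ℕ, K < t → ∀ π : X → ℕ, Measurable π →
        (∀ x', π x' ∈ Finset.Icc 1 K) →
        |(∫ x', fhat t ω x' (π x') ∂Dx) - ∫ x', fstar x' (π x') ∂Dx|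
          ≤ Real.sqrt (∫ x', (1 : ℝ) /
                (((Finset.Icc 1 (t - 1)).filter (fun i => π x' = p i ω x')).card : ℝ) ∂Dx)
            * Real.sqrt (68 * Real.log (2 * F.card * t ^ 3 / δ))} := by
  classical
  have hFpos : 0 < (F.card : ℝ) := by exact_mod_cast Finset.card_pos.2 ⟨fstar, hfstar⟩
  obtain ⟨hδ0, hδ1⟩ := hδ
  set c : ℕ → ℝ := fun t => 2 * F.card * (t : ℝ) ^ 3 / δ with hc
  have hcpos : ∀ n : ℕ, 0 < c (n + 2) := fun n => by simp only [hc]; positivity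
  -- `B n f` is the bad event for the function `f` at round `t = n + 2`
  set B : ℕ → (X → ℕ → ℝ) → Set Ω := fun n f =>
    {ω | c (n + 2) ≤ expProc Dx f fstar x a r p (n + 1) ω} with hB
  have hmeasZ : ∀ f ∈ F, ∀ n, Measurable (fun ω => expProc Dx f fstar x a r p n ω) :=
    fun f hf n => (measurable_expProc (hFmeas f hf) (hFmeas _ hfstar) hp_meas n).mono
      (histFilt_le hx_meas ha_meas hr_meas n) le_rfl
  have hBmeas : ∀ n, ∀ f ∈ F, MeasurableSet (B n f) := fun n f hf =>
    measurableSet_le measurable_const (hmeasZ f hf (n + 1))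
  have hBP : ∀ n, ∀ f ∈ F, P (B n f) ≤ ENNReal.ofReal (1 / c (n + 2)) := by
    intro n f hf
    have h1 := integral_expProc_le (hFmeas f hf) (hFmeas _ hfstar) (hFrange f hf)
      (hFrange _ hfstar) hx_meas ha_meas hr_meas hr_range hx_law hx_indep hmean hp_meas hplay
      (n + 1)
    have hint : Integrable (fun ω => expProc Dx f fstar x a r p (n + 1) ω) P :=
      Integrable.of_bound (hmeasZ f hf _).aestronglyMeasurable (Real.exp (n + 1 : ℕ))
        (Filter.Eventually.of_forall fun ω => by
          rw [Real.norm_eq_abs, expProc, abs_of_nonneg (Real.exp_pos _).le]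
          exact expProc_le (hFrange f hf) (hFrange _ hfstar) hr_range _ ω)
    have h2 := mul_meas_ge_le_integral_of_nonneg
      (Filter.Eventually.of_forall fun ω => (Real.exp_pos _).le) hint (c (n + 2))
    rw [← ENNReal.ofReal_toReal (measure_ne_top P (B n f))]
    apply ENNReal.ofReal_le_ofReal
    rw [le_div_iff₀ (hcpos n), mul_comm]
    exact h2.trans h1
  set bad : Set Ω := ⋃ n, ⋃ f ∈ F, B n f with hbad
  have hbadm : MeasurableSet bad :=
    MeasurableSet.iUnion fun n => F.measurableSet_biUnion fun f hf => hBmeas n f hf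
  have hbadP : P bad ≤ ENNReal.ofReal (δ / 2) := by
    calc P bad ≤ ∑' n, P (⋃ f ∈ F, B n f) := measure_iUnion_le _
      _ ≤ ∑' n : ℕ, ENNReal.ofReal (δ / 2) * ENNReal.ofReal (1 / ((n : ℝ) + 2) ^ 3) := by
          refine ENNReal.tsum_le_tsum fun n => ?_
          refine (measure_biUnion_finset_le F _).trans ?_
          refine (Finset.sum_le_card_nsmul _ _ _ (hBP n)).trans ?_
          rw [nsmul_eq_mul, ← ENNReal.ofReal_natCast, ← ENNReal.ofReal_mul hFpos.le,
            ← ENNReal.ofReal_mul (by positivity)]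
          apply ENNReal.ofReal_le_ofReal
          apply le_of_eq
          simp only [hc]
          push_cast
          field_simp
      _ ≤ ENNReal.ofReal (δ / 2) := by
          rw [ENNReal.tsum_mul_left]
          exact mul_le_of_le_one_right' tsum_inv_cube_le
  have hgood : ENNReal.ofReal (1 - δ / 2) ≤ P badᶜ := by
    rw [prob_compl_eq_one_sub hbadm, ENNReal.ofReal_sub _ (by positivity), ENNReal.ofReal_one]
    exact tsub_le_tsub_left hbadP 1
  refine hgood.trans (measure_mono fun ω hω => ?_)
  intro t ht π hπ hπK
  set f := fhat t ω with hf
  have hfF : f ∈ F := hfhat_mem t ω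
  have hp_ω : ∀ i ∈ Finset.Icc 1 (t - 1), Measurable (p i ω) := fun i hi =>
    (hp_meas i (Finset.mem_Icc.1 hi).1).comp
      (@measurable_prodMk_left Ω X (histFilt x a r (i - 1)) _ ω)
  have hcomp : ∀ f ∈ F, Integrable (fun x' => f x' (π x')) Dx := fun f hf =>
    Integrable.of_bound
      ((measurable_uncurry_nat (hFmeas f hf)).comp
        (measurable_id.prodMk hπ)).aestronglyMeasurable 1
      (Filter.Eventually.of_forall fun x' => by
        rw [Real.norm_eq_abs, abs_of_nonneg (hFrange f hf _ _).1]; exact (hFrange f hf _ _).2)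
  rw [← integral_sub (hcomp f hfF) (hcomp fstar hfstar)]
  -- during the first `K` rounds every action is played once, so the counts are positive
  refine (abs_integral_le_of_count Dx (Finset.Icc 1 (t - 1)) (fun i => p i ω) hp_ω π hπ
    (fun x' k => f x' k - fstar x' k)
    (fun k => (hFmeas f hfF k).sub (hFmeas fstar hfstar k))
    (fun x' k => sq_sub_le_one (hFrange f hfF _ _) (hFrange fstar hfstar _ _))
    (fun x' => by
      obtain ⟨h1, h2⟩ := Finset.mem_Icc.1 (hπK x')
      exact ⟨π x', Finset.mem_Icc.2 ⟨h1, by omega⟩, (hp_init _ ω x' h1 h2).symm⟩)).trans ?_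
  refine mul_le_mul_of_nonneg_left (Real.sqrt_le_sqrt ?_) (Real.sqrt_nonneg _)
  change ∑ i ∈ Finset.Icc 1 (t - 1), meanSqDist Dx f fstar p i ω ≤ 68 * Real.log (c t)
  obtain ⟨n, rfl⟩ : ∃ n, t = n + 2 := ⟨t - 2, by omega⟩
  have hnB : ω ∉ B n f := fun h => hω (Set.mem_iUnion.2 ⟨n, Set.mem_iUnion₂.2 ⟨f, hfF, h⟩⟩)
  have hlt : expProc Dx f fstar x a r p (n + 1) ω < c (n + 2) := not_le.1 hnB
  have hlog := (Real.lt_log_iff_exp_lt (hcpos n)).2 hlt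
  rw [Finset.sum_sub_distrib, ← Finset.sum_div, ← Finset.sum_div] at hlog
  have hls := hfhat_ls (n + 2) ω fstar hfstar
  have hY : ∑ i ∈ Finset.Icc 1 (n + 1), excessLoss f fstar x a r i ω ≤ 0 := by
    simp only [excessLoss]
    rw [Finset.sum_sub_distrib]
    exact sub_nonpos.2 hls
  have hv : 0 ≤ ∑ i ∈ Finset.Icc 1 (n + 1), meanSqDist Dx f fstar p i ω :=
    Finset.sum_nonneg fun i _ => (meanSqDist_mem (hFrange f hfF) (hFrange fstar hfstar) i ω).1
  change ∑ i ∈ Finset.Icc 1 (n + 1), meanSqDist Dx f fstar p i ω ≤ _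
  linarith
end

section
/- Let π_1,...,π_T be measurable policies such that for t ≤ K, π_t(x) = t for all x ∈ X, and for K < t ≤ T the π_t are arbitrary measurable policies. Then for all T > K: Σ_{t=K+1}^T E_x[ 1 / Σ_{j=1}^{t−1} 1{π_t(x) = π_j(x)} ] ≤ K + K log(T/K). -/
/-!
The inequality holds pointwise in `x`. For fixed `x`, let `n_a` be the number of times action `a`
is played in rounds `1, ..., T`. The summand at round `t` is `1 / n`, where `n` is the number of
earlier plays of the action chosen at `t`, so grouping the rounds by action telescopes to
`∑ a, H (n_a - 1)` with `H` the harmonic numbers (`sum_inv_count_le`); the initial rounds guarantee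
`n ≥ 1`. Since `H (n_a - 1) ≤ 1 + log n_a` and `∑ a, n_a = T`, concavity of `log` gives the bound
`K + K log (T / K)` (`sum_inv_count_le_log`). The expectation of the pointwise bound is the claim,
the summands being measurable and bounded by `1`.
-/

open MeasureTheory

/-- The number of rounds `j` with `1 ≤ j < t` in which the action sequence `p` plays `a`. -/
def playCount (p : ℕ → ℕ) (t a : ℕ) : ℕ := ((Finset.Ico 1 t).filter (fun j => a = p j)).card

lemma playCount_succ (p : ℕ → ℕ) (t a : ℕ) (ht : 1 ≤ t) :
    playCount p (t + 1) a = playCount p t a + if a = p t then 1 else 0 := by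
  simp only [playCount, Finset.card_filter]
  rw [Finset.sum_Ico_succ_top ht]

lemma one_le_playCount (p : ℕ → ℕ) (K t a : ℕ) (hinit : ∀ t, 1 ≤ t → t ≤ K → p t = t)
    (ht : K < t) (ha : a ∈ Finset.Icc 1 K) : 1 ≤ playCount p t a := by
  rw [Finset.mem_Icc] at ha
  refine Finset.card_pos.mpr ⟨a, ?_⟩
  simp only [Finset.mem_filter, Finset.mem_Ico]
  exact ⟨⟨ha.1, by omega⟩, (hinit a ha.1 ha.2).symm⟩

/-- Potential argument: each round raises the potential `∑ a, H (n_a - 1)` by exactly the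
corresponding summand. -/
lemma sum_inv_count_le (p : ℕ → ℕ) (K T : ℕ) (hKT : K ≤ T)
    (hrange : ∀ t, 1 ≤ t → t ≤ T → p t ∈ Finset.Icc 1 K)
    (hinit : ∀ t, 1 ≤ t → t ≤ K → p t = t) :
    ∑ t ∈ Finset.Icc (K + 1) T, (1 : ℝ) / (playCount p t (p t) : ℝ)
      ≤ ∑ a ∈ Finset.Icc 1 K, (harmonic (playCount p (T + 1) a - 1) : ℝ) := by
  induction T, hKT using Nat.le_induction with
  | base =>
    rw [Finset.Icc_eq_empty (by omega), Finset.sum_empty]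
    refine Finset.sum_nonneg fun a _ => ?_
    have : (0 : ℚ) ≤ harmonic (playCount p (K + 1) a - 1) :=
      Finset.sum_nonneg fun i _ => by positivity
    exact_mod_cast this
  | succ T hKT ih =>
    have ih := ih fun t h1 h2 => hrange t h1 (by omega)
    have hp := hrange (T + 1) (by omega) le_rfl
    have key : ∀ a ∈ Finset.Icc 1 K, (harmonic (playCount p (T + 1 + 1) a - 1) : ℝ)
        = harmonic (playCount p (T + 1) a - 1)
          + if a = p (T + 1) then (1 : ℝ) / (playCount p (T + 1) (p (T + 1)) : ℝ) else 0 := by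
      intro a ha
      have h1 := one_le_playCount p K (T + 1) a hinit (by omega) ha
      rw [playCount_succ p (T + 1) a (by omega)]
      split_ifs with h
      · rw [← h]
        obtain ⟨n, hn⟩ := Nat.exists_eq_add_of_le' h1
        rw [hn, Nat.add_sub_cancel, Nat.add_sub_cancel, harmonic_succ]
        push_cast
        rw [one_div]
      · simp
    rw [Finset.sum_Icc_succ_top (by omega), Finset.sum_congr rfl key, Finset.sum_add_distrib,
      Finset.sum_ite_eq' (Finset.Icc 1 K), if_pos hp]
    linarith

lemma sum_playCount (p : ℕ → ℕ) (K T : ℕ)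
    (hrange : ∀ t, 1 ≤ t → t ≤ T → p t ∈ Finset.Icc 1 K) :
    ∑ a ∈ Finset.Icc 1 K, playCount p (T + 1) a = T := by
  have h := Finset.card_eq_sum_card_fiberwise (f := p) (s := Finset.Ico 1 (T + 1))
    (t := Finset.Icc 1 K) (fun t ht => by
      have := Finset.mem_Ico.mp (Finset.mem_coe.mp ht)
      exact hrange t this.1 (by omega))
  rw [Nat.card_Ico, Nat.add_sub_cancel] at h
  refine Eq.trans ?_ h.symm
  simp only [playCount, eq_comm]

/-- The pointwise inequality, for a single sequence of actions. -/
lemma sum_inv_count_le_log (p : ℕ → ℕ) (K T : ℕ) (hK : 1 ≤ K) (hKT : K < T)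
    (hrange : ∀ t, 1 ≤ t → t ≤ T → p t ∈ Finset.Icc 1 K)
    (hinit : ∀ t, 1 ≤ t → t ≤ K → p t = t) :
    ∑ t ∈ Finset.Icc (K + 1) T, (1 : ℝ) / (playCount p t (p t) : ℝ)
      ≤ K + K * Real.log ((T : ℝ) / (K : ℝ)) := by
  refine (sum_inv_count_le p K T hKT.le hrange hinit).trans ?_
  have hK0 : (0 : ℝ) < K := by exact_mod_cast hK
  have hT0 : (0 : ℝ) < T := by exact_mod_cast (by omega : 0 < T)
  -- The tangent line of `log` at `T / K`, the average of the counts, replaces Jensen's inequality.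
  have key : ∀ a ∈ Finset.Icc 1 K, (harmonic (playCount p (T + 1) a - 1) : ℝ)
      ≤ (playCount p (T + 1) a : ℝ) * (K / T) + Real.log ((T : ℝ) / K) := by
    intro a ha
    have h1 := one_le_playCount p K (T + 1) a hinit (by omega) ha
    set n := playCount p (T + 1) a
    have hn0 : (0 : ℝ) < n := by exact_mod_cast h1
    have hmono : (harmonic (n - 1) : ℝ) ≤ harmonic n := by
      have : harmonic (n - 1) ≤ harmonic n :=
        Finset.sum_le_sum_of_subset_of_nonneg
          (Finset.range_mono (Nat.sub_le n 1)) fun i _ _ => by positivity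
      exact_mod_cast this
    have hlog := harmonic_le_one_add_log n
    have htan := Real.log_le_sub_one_of_pos (show (0 : ℝ) < n * (K / T) by positivity)
    rw [Real.log_mul hn0.ne' (by positivity), Real.log_div hK0.ne' hT0.ne'] at htan
    rw [Real.log_div hT0.ne' hK0.ne']
    linarith
  refine (Finset.sum_le_sum key).trans (le_of_eq ?_)
  rw [Finset.sum_add_distrib, ← Finset.sum_mul, ← Nat.cast_sum, sum_playCount p K T hrange,
    Finset.sum_const, Nat.card_Icc, Nat.add_sub_cancel, nsmul_eq_mul]
  field_simp

lemma integrable_inv_count {X : Type*} [MeasurableSpace X]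
    (μ : Measure X) [IsProbabilityMeasure μ] (π : ℕ → X → ℕ) (hmeas : ∀ t, Measurable (π t))
    (t : ℕ) :
    Integrable (fun x => (1 : ℝ) / (playCount (fun j => π j x) t (π t x) : ℝ)) μ := by
  have hm : Measurable fun x => (1 : ℝ) / (playCount (fun j => π j x) t (π t x) : ℝ) := by
    simp only [playCount, Finset.card_filter, Nat.cast_sum]
    refine Measurable.const_div (Finset.measurable_fun_sum _ fun j _ => ?_) _
    exact measurable_from_top.comp (Measurable.ite (measurableSet_eq_fun (hmeas t) (hmeas j))
      measurable_const measurable_const)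
  refine Integrable.of_bound hm.aestronglyMeasurable 1 (Filter.Eventually.of_forall fun x => ?_)
  rw [Real.norm_of_nonneg (by positivity), one_div]
  exact Nat.cast_inv_le_one _

/-- **Contextual potential lemma.**
Let `π 1, ..., π T` be measurable policies `X → {1,...,K}` such that `π t x = t` for all
`t ≤ K` and all `x`.  Then for all `T > K`,
`∑_{t=K+1}^T E_x [ 1 / ∑_{j=1}^{t-1} 1{π t x = π j x} ] ≤ K + K log (T / K)`. -/
theorem stmt_2 {X : Type*} [MeasurableSpace X]
    (μ : Measure X) [IsProbabilityMeasure μ]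
    (K T : ℕ) (hK : 1 ≤ K) (hKT : K < T)
    (π : ℕ → X → ℕ)
    (hmeas : ∀ t, Measurable (π t))
    (hrange : ∀ t x, 1 ≤ t → t ≤ T → π t x ∈ Finset.Icc 1 K)
    (hinit : ∀ t x, 1 ≤ t → t ≤ K → π t x = t) :
    ∑ t ∈ Finset.Icc (K + 1) T,
        ∫ x, (1 : ℝ) / (((Finset.Ico 1 t).filter (fun j => π t x = π j x)).card : ℝ) ∂μ
      ≤ K + K * Real.log ((T : ℝ) / (K : ℝ)) := by
  change ∑ t ∈ Finset.Icc (K + 1) T,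
    ∫ x, (1 : ℝ) / (playCount (fun j => π j x) t (π t x) : ℝ) ∂μ ≤ _
  rw [← integral_finsetSum _ fun t _ => integrable_inv_count μ π hmeas t]
  refine (integral_mono (integrable_finsetSum _ fun t _ => integrable_inv_count μ π hmeas t)
    (integrable_const ((K : ℝ) + K * Real.log ((T : ℝ) / (K : ℝ)))) fun x => ?_).trans
    (le_of_eq (by simp))
  exact sum_inv_count_le_log (fun j => π j x) K T hK hKT (fun t => hrange t x)
    (fun t => hinit t x)
end

section
/- Let K ≤ T be positive integers and let a_1,...,a_T ∈ {1,...,K} be any sequence with a_t = t for t = 1,...,K. Then Σ_{t=K+1}^T 1/#{ j : 1 ≤ j < t, a_j = a_t } ≤ K + K log(T/K). -/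
/-!
Let `n k` be the number of visits to `k` among `a 1, …, a T`. The successive visits to `k`
contribute `1/1, 1/2, …, 1/(n k - 1)` after the first one, so the whole sum is at most
`∑ k, (1 + log (n k))`. Since `∑ k, n k = T`, concavity of the logarithm, in the form of its tangent
line at the mean `T / K`, bounds `∑ k, log (n k)` by `K log (T / K)`.

In the regrouping, the first visits need no special treatment: they contribute `1 / 0 = 0`.
-/

/-- Regrouping by value: each value visited `n` times contributes `∑ i < n, 1 / i`, where the term
`i = 0`, coming from the first visit, is `1 / 0 = 0`. -/
lemma sum_one_div_count_eq (K : ℕ) (a : ℕ → ℕ) (T : ℕ)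
    (ha : ∀ t, 1 ≤ t → t ≤ T → a t ∈ Finset.Icc 1 K) :
    ∑ t ∈ Finset.Ico 1 (T + 1),
        (1 : ℝ) / (((Finset.Ico 1 t).filter (fun j => a j = a t)).card : ℝ)
      = ∑ k ∈ Finset.Icc 1 K,
        ∑ i ∈ Finset.range ((Finset.Ico 1 (T + 1)).filter (fun j => a j = k)).card,
          (1 : ℝ) / (i : ℝ) := by
  induction T with
  | zero => simp
  | succ T ih =>
    have hmem := ha (T + 1) (by omega) le_rfl
    rw [Finset.sum_Ico_succ_top (by omega), ih fun t h1 h2 => ha t h1 (by omega),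
      ← Finset.add_sum_erase _ _ hmem, ← Finset.add_sum_erase _ _ hmem,
      ← Finset.insert_Ico_right_eq_Ico_add_one (show 1 ≤ T + 1 by omega)]
    have hrest : ∀ k ∈ (Finset.Icc 1 K).erase (a (T + 1)),
        (insert (T + 1) (Finset.Ico 1 (T + 1))).filter (fun j => a j = k)
          = (Finset.Ico 1 (T + 1)).filter (fun j => a j = k) := fun k hk => by
      rw [Finset.filter_insert, if_neg (Finset.ne_of_mem_erase hk).symm]
    rw [Finset.filter_insert, if_pos rfl, Finset.card_insert_of_notMem (by simp),
      Finset.sum_range_succ, add_right_comm]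
    congr 1
    exact Finset.sum_congr rfl fun k hk => by rw [hrest k hk]

lemma sum_range_one_div_le (n : ℕ) (hn : 1 ≤ n) :
    ∑ i ∈ Finset.range n, (1 : ℝ) / (i : ℝ) ≤ 1 + Real.log n := by
  obtain ⟨m, rfl⟩ := Nat.exists_eq_add_of_le' hn
  have h := harmonic_le_one_add_log (m + 1)
  rw [harmonic_succ] at h
  have hpos : (0 : ℝ) ≤ ((m + 1 : ℕ) : ℝ)⁻¹ := by positivity
  have hm : ∑ i ∈ Finset.range (m + 1), (1 : ℝ) / (i : ℝ) = (harmonic m : ℝ) := by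
    rw [Finset.sum_range_succ']
    simp [harmonic]
  push_cast at h hpos ⊢
  rw [hm]
  linarith

/-- **Pointwise (per-context) contextual potential lemma.**
Let `K ≤ T` be positive integers and let `a 1, ..., a T ∈ {1,...,K}` be any sequence with
`a t = t` for `t = 1, ..., K`.  Then
`∑_{t=K+1}^T 1 / #{j : 1 ≤ j < t, a j = a t} ≤ K + K log (T / K)`. -/
theorem stmt_3 (K T : ℕ) (hK : 1 ≤ K) (hKT : K ≤ T)
    (a : ℕ → ℕ)
    (ha_range : ∀ t, 1 ≤ t → t ≤ T → a t ∈ Finset.Icc 1 K)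
    (ha_init : ∀ t, 1 ≤ t → t ≤ K → a t = t) :
    ∑ t ∈ Finset.Icc (K + 1) T,
        (1 : ℝ) / (((Finset.Ico 1 t).filter (fun j => a j = a t)).card : ℝ)
      ≤ K + K * Real.log ((T : ℝ) / (K : ℝ)) := by
  have hK0 : (0 : ℝ) < K := by exact_mod_cast hK
  have hT0 : (0 : ℝ) < T := by exact_mod_cast hK.trans hKT
  set n : ℕ → ℕ := fun k => ((Finset.Ico 1 (T + 1)).filter (fun j => a j = k)).card with hn
  have hn1 : ∀ k ∈ Finset.Icc 1 K, 1 ≤ n k := fun k hk => by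
    rw [Finset.mem_Icc] at hk
    refine Finset.card_pos.mpr ⟨k, ?_⟩
    rw [Finset.mem_filter, Finset.mem_Ico]
    exact ⟨by omega, ha_init k hk.1 hk.2⟩
  have hsum : ∑ k ∈ Finset.Icc 1 K, (n k : ℝ) = T := by
    have h := Finset.card_eq_sum_card_fiberwise (s := Finset.Ico 1 (T + 1))
      (t := Finset.Icc 1 K) (f := a) fun t ht => by
        have ht' := Finset.mem_Ico.mp (Finset.mem_coe.mp ht)
        exact ha_range t ht'.1 (by omega)
    rw [Nat.card_Ico, Nat.add_sub_cancel] at h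
    exact_mod_cast h.symm
  -- Tangent line of `log` at the mean `T / K`.
  have hlog : ∀ k ∈ Finset.Icc 1 K,
      1 + Real.log (n k) ≤ (n k : ℝ) * (K / T) + Real.log ((T : ℝ) / K) := fun k hk => by
    have hk0 : (0 : ℝ) < n k := by exact_mod_cast hn1 k hk
    have h := Real.log_le_sub_one_of_pos (show (0 : ℝ) < n k * (K / T) by positivity)
    rw [Real.log_mul hk0.ne' (by positivity), ← inv_div (T : ℝ) K, Real.log_inv, inv_div] at h
    linarith
  calc _ ≤ ∑ t ∈ Finset.Ico 1 (T + 1),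
        (1 : ℝ) / (((Finset.Ico 1 t).filter (fun j => a j = a t)).card : ℝ) := by
        refine Finset.sum_le_sum_of_subset_of_nonneg (fun t ht => ?_) fun _ _ _ => by positivity
        rw [Finset.mem_Icc] at ht
        rw [Finset.mem_Ico]
        omega
    _ = ∑ k ∈ Finset.Icc 1 K, ∑ i ∈ Finset.range (n k), (1 : ℝ) / (i : ℝ) :=
        sum_one_div_count_eq K a T ha_range
    _ ≤ ∑ k ∈ Finset.Icc 1 K, ((n k : ℝ) * (K / T) + Real.log ((T : ℝ) / K)) :=
        Finset.sum_le_sum fun k hk => (sum_range_one_div_le _ (hn1 k hk)).trans (hlog k hk)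
    _ = K + K * Real.log ((T : ℝ) / (K : ℝ)) := by
        rw [Finset.sum_add_distrib, ← Finset.sum_mul, hsum, Finset.sum_const, Nat.card_Icc,
          Nat.add_sub_cancel, nsmul_eq_mul, mul_div_cancel₀ _ hT0.ne']
end

section
/- For an arbitrary (possibly randomized) contextual bandit algorithm and any δ ∈ (0,1), with probability at least 1 − δ/2 the following holds simultaneously for all t ≥ 2 and all fixed (deterministic) sequences f_2, f_3, ... ∈ F: Σ_{i=1}^{t−1} E[ (f_t(x_i,a_i) − f*(x_i,a_i))² | H_{i−1} ] ≤ 68 log(2|F| t³/δ) + 2 Σ_{i=1}^{t−1} [ (f_t(x_i,a_i) − r_i)² − (f*(x_i,a_i) − r_i)² ], where E[· | H_{i−1}] denotes conditional expectation over (x_i, a_i) given the history H_{i−1}. -/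
/-! Fix `f ∈ F` and write `Y i = (f - r i)² - (f* - r i)²` and `S i = (f - f*)²`, both evaluated at
`(x i, a i)`. Since `Y i = S i + 2 (f - f*) (f* - r i)` and the reward has conditional mean `f*`, the
variables `Y i` and `S i` have the same conditional expectation `E i` given the past
(`condExp_excess_loss`). Moreover `|Y i| ≤ 1` and `(Y i)² ≤ 4 S i`, so `exp v ≤ 1 + v + v²` with
`v = - Y i / 8` gives `E[exp (- Y i / 8) | past] ≤ 1 - E i / 16 ≤ exp (- E i / 16)`. Hence
`exp (∑ (E i / 16 - Y i / 8))` is a supermartingale of mean at most one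
(`integral_exp_sum_le_one`), and Markov's inequality bounds by `1 / u` the probability that
`∑ (E i - 2 Y i)` exceeds `16 log u`. Taking `u = 2 |F| t³ / δ`, a union bound over `f ∈ F` and
`t ≥ 2` finishes the proof, because `∑_{t ≥ 2} 1 / t³ ≤ 1`. -/

open MeasureTheory ProbabilityTheory

section Aux

variable {Ω : Type*} [mΩ : MeasurableSpace Ω]

/-- The one-step supermartingale inequality: multiplying a bounded past-measurable weight `M` by
`exp (E / 16 - Y / 8)`, with `E` the conditional expectation of `S`, does not increase its mean. -/
lemma integral_mul_exp_le (P : Measure Ω) [IsProbabilityMeasure P]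
    (m : MeasurableSpace Ω) (hm : m ≤ mΩ) (Y S M : Ω → ℝ)
    (hY : Measurable[mΩ] Y) (hS : Measurable[mΩ] S)
    (hY1 : ∀ ω, |Y ω| ≤ 1) (hS0 : ∀ ω, 0 ≤ S ω) (hS1 : ∀ ω, S ω ≤ 1)
    (hYS : ∀ ω, Y ω ^ 2 ≤ 4 * S ω) (hcond : P[Y | m] =ᵐ[P] P[S | m])
    (hM : StronglyMeasurable[m] M) (hM0 : ∀ ω, 0 ≤ M ω)
    (C : ℝ) (hMC : ∀ᵐ ω ∂P, M ω ≤ C) :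
    ∫ ω, M ω * Real.exp ((P[S | m]) ω / 16 - Y ω / 8) ∂P ≤ ∫ ω, M ω ∂P := by
  have hSi : Integrable S P := Integrable.of_bound hS.aestronglyMeasurable 1
    (.of_forall fun ω => by rw [Real.norm_eq_abs, abs_of_nonneg (hS0 ω)]; exact hS1 ω)
  have hYi : Integrable Y P := Integrable.of_bound hY.aestronglyMeasurable 1
    (.of_forall fun ω => hY1 ω)
  have hE0 : ∀ᵐ ω ∂P, 0 ≤ (P[S | m]) ω := condExp_nonneg (.of_forall hS0)
  have hE1 : ∀ᵐ ω ∂P, (P[S | m]) ω ≤ 1 := by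
    have h := condExp_mono (m := m) hSi (integrable_const (1 : ℝ)) (.of_forall hS1)
    rw [condExp_const hm] at h
    exact h
  have hEm : StronglyMeasurable[m] (P[S | m]) := stronglyMeasurable_condExp
  let W : Ω → ℝ := fun ω => M ω * Real.exp ((P[S | m]) ω / 16)
  let Z : Ω → ℝ := fun ω => 1 - Y ω / 8 + S ω / 16
  have hWm : StronglyMeasurable[m] W := by
    refine hM.mul ?_
    exact (Real.measurable_exp.comp (hEm.measurable.div_const 16)).stronglyMeasurable
  have hW0 : ∀ ω, 0 ≤ W ω := fun ω => mul_nonneg (hM0 ω) (Real.exp_pos _).le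
  have hZi : Integrable Z P :=
    ((integrable_const 1).sub (hYi.div_const 8)).add (hSi.div_const 16)
  have hWC : ∀ᵐ ω ∂P, ‖W ω‖ ≤ C * Real.exp 1 := by
    filter_upwards [hMC, hE1] with ω h1 h2
    rw [Real.norm_eq_abs, abs_of_nonneg (hW0 ω)]
    exact mul_le_mul h1 (Real.exp_le_exp.2 (by linarith)) (Real.exp_pos _).le ((hM0 ω).trans h1)
  have hWZi : Integrable (W * Z) P :=
    hZi.bdd_mul (hWm.mono hm).aestronglyMeasurable hWC
  have hMi : Integrable M P := Integrable.of_bound (hM.mono hm).aestronglyMeasurable C (by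
    filter_upwards [hMC] with ω h
    rwa [Real.norm_eq_abs, abs_of_nonneg (hM0 ω)])
  have hZc : P[Z | m] =ᵐ[P] fun ω => 1 - (P[S | m]) ω / 16 := by
    have e : Z = ((fun _ => (1 : ℝ)) - (1 / 8 : ℝ) • Y) + (1 / 16 : ℝ) • S := by
      ext ω; simp [Z]; ring
    rw [e]
    have h1 := condExp_add (m := m) ((integrable_const (1 : ℝ)).sub (hYi.smul (1 / 8 : ℝ)))
      (hSi.smul (1 / 16 : ℝ))
    have h2 := condExp_sub (m := m) (integrable_const (1 : ℝ)) (hYi.smul (1 / 8 : ℝ))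
    have h3 := condExp_smul (μ := P) (1 / 8 : ℝ) Y m
    have h4 := condExp_smul (μ := P) (1 / 16 : ℝ) S m
    rw [condExp_const hm] at h2
    filter_upwards [h1, h2, h3, h4, hcond] with ω g1 g2 g3 g4 g5
    rw [g1, Pi.add_apply, g2, Pi.sub_apply, g3, g4, Pi.smul_apply, Pi.smul_apply, g5]
    simp only [smul_eq_mul]; ring
  have hpull := condExp_mul_of_stronglyMeasurable_left hWm hWZi hZi
  have hle : ∀ ω, M ω * Real.exp ((P[S | m]) ω / 16 - Y ω / 8) ≤ (W * Z) ω := by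
    intro ω
    have hv : |(-(Y ω / 8))| ≤ 1 := by
      have := hY1 ω
      rw [abs_neg, abs_div]; norm_num; linarith
    have h := (abs_le.1 (Real.abs_exp_sub_one_sub_id_le hv)).2
    have h2 : Real.exp (-(Y ω / 8)) ≤ Z ω := by
      have := hYS ω
      simp only [Z]; nlinarith
    rw [sub_eq_add_neg, Real.exp_add, ← mul_assoc]
    exact mul_le_mul_of_nonneg_left h2 (hW0 ω)
  calc ∫ ω, M ω * Real.exp ((P[S | m]) ω / 16 - Y ω / 8) ∂P
      ≤ ∫ ω, (W * Z) ω ∂P := integral_mono_of_nonneg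
        (.of_forall fun ω => mul_nonneg (hM0 ω) (Real.exp_pos _).le) hWZi (.of_forall hle)
    _ = ∫ ω, (P[W * Z | m]) ω ∂P := (integral_condExp hm).symm
    _ ≤ ∫ ω, M ω ∂P := by
      refine integral_mono_ae integrable_condExp hMi ?_
      filter_upwards [hpull, hZc] with ω g1 g2
      rw [g1, Pi.mul_apply, g2]
      have h := Real.add_one_le_exp (-((P[S | m]) ω / 16))
      have h3 : Real.exp ((P[S | m]) ω / 16) * Real.exp (-((P[S | m]) ω / 16)) = 1 := by
        rw [← Real.exp_add]; simp
      calc W ω * (1 - (P[S | m]) ω / 16)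
          ≤ W ω * Real.exp (-((P[S | m]) ω / 16)) :=
            mul_le_mul_of_nonneg_left (by linarith) (hW0 ω)
        _ = M ω := by simp only [W]; rw [mul_assoc, h3, mul_one]

/-- The exponential supermartingale has mean at most one; measurability and an almost sure upper
bound are carried along in the induction. -/
lemma integral_exp_sum_le_one (P : Measure Ω) [IsProbabilityMeasure P]
    (H : ℕ → MeasurableSpace Ω) (hH : ∀ n, H n ≤ mΩ) (hmono : Monotone H) (Y S : ℕ → Ω → ℝ)
    (hY : ∀ i, 1 ≤ i → Measurable[H i] (Y i)) (hS : ∀ i, Measurable (S i))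
    (hY1 : ∀ i ω, |Y i ω| ≤ 1) (hS0 : ∀ i ω, 0 ≤ S i ω) (hS1 : ∀ i ω, S i ω ≤ 1)
    (hYS : ∀ i ω, Y i ω ^ 2 ≤ 4 * S i ω)
    (hcond : ∀ i, 1 ≤ i → P[Y i | H (i - 1)] =ᵐ[P] P[S i | H (i - 1)]) (n : ℕ) :
    Measurable[H n] (fun ω => Real.exp
        (∑ i ∈ Finset.Icc 1 n, ((P[S i | H (i - 1)]) ω / 16 - Y i ω / 8))) ∧
      (∀ᵐ ω ∂P, Real.exp
        (∑ i ∈ Finset.Icc 1 n, ((P[S i | H (i - 1)]) ω / 16 - Y i ω / 8)) ≤ Real.exp n) ∧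
      ∫ ω, Real.exp
        (∑ i ∈ Finset.Icc 1 n, ((P[S i | H (i - 1)]) ω / 16 - Y i ω / 8)) ∂P ≤ 1 := by
  induction n with
  | zero => simp
  | succ n ih =>
    obtain ⟨ih1, ih2, ih3⟩ := ih
    have hn : 1 ≤ n + 1 := by omega
    simp only [Finset.sum_Icc_succ_top hn, Real.exp_add, Nat.add_sub_cancel]
    have hEm : Measurable[H n] (P[S (n + 1) | H n]) := stronglyMeasurable_condExp.measurable
    refine ⟨?_, ?_, ?_⟩
    · have h1 := ih1.mono (hmono n.le_succ) le_rfl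
      have h2 := hEm.mono (hmono n.le_succ) le_rfl
      exact h1.mul (Real.measurable_exp.comp
        ((h2.div_const 16).sub ((hY (n + 1) hn).div_const 8)))
    · have hSi : Integrable (S (n + 1)) P := Integrable.of_bound (hS _).aestronglyMeasurable 1
        (.of_forall fun ω => by rw [Real.norm_eq_abs, abs_of_nonneg (hS0 _ ω)]; exact hS1 _ ω)
      have hE1 : ∀ᵐ ω ∂P, (P[S (n + 1) | H n]) ω ≤ 1 := by
        have h := condExp_mono (m := H n) hSi (integrable_const (1 : ℝ)) (.of_forall (hS1 _))
        rw [condExp_const (hH n)] at h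
        exact h
      filter_upwards [ih2, hE1] with ω g1 g2
      have := (abs_le.1 (hY1 (n + 1) ω)).1
      rw [Nat.cast_succ, Real.exp_add]
      exact mul_le_mul g1 (Real.exp_le_exp.2 (by linarith)) (Real.exp_pos _).le
        (Real.exp_pos _).le
    · refine (integral_mul_exp_le P (H n) (hH n) (Y (n + 1)) (S (n + 1)) _
        ((hY (n + 1) hn).mono (hH _) le_rfl) (hS _) (hY1 _) (hS0 _) (hS1 _) (hYS _)
        (hcond (n + 1) hn) ih1.stronglyMeasurable (fun ω => (Real.exp_pos _).le) _ ih2).trans ih3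

/-- The excess squared loss of a prediction `g` over the conditional mean `q` of `r` has the same
conditional expectation, given a coarser σ-algebra `m`, as the squared distance of `g` to `q`. -/
lemma condExp_excess_loss (P : Measure Ω) [IsProbabilityMeasure P]
    (m G : MeasurableSpace Ω) (hmG : m ≤ G) (hG : G ≤ mΩ) (g q r : Ω → ℝ)
    (hg : Measurable[G] g) (hq : Measurable[G] q) (hr : Measurable[mΩ] r)
    (hg1 : ∀ ω, g ω ∈ Set.Icc (0 : ℝ) 1) (hq1 : ∀ ω, q ω ∈ Set.Icc (0 : ℝ) 1)
    (hr1 : ∀ ω, r ω ∈ Set.Icc (0 : ℝ) 1) (hmean : P[r | G] =ᵐ[P] q) :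
    P[fun ω => (g ω - r ω) ^ 2 - (q ω - r ω) ^ 2 | m] =ᵐ[P] P[fun ω => (g ω - q ω) ^ 2 | m] := by
  have hgm := hg.mono hG le_rfl
  have hqm := hq.mono hG le_rfl
  have hri : Integrable r P := Integrable.of_bound hr.aestronglyMeasurable 1
    (.of_forall fun ω => by rw [Real.norm_eq_abs, abs_of_nonneg (hr1 ω).1]; exact (hr1 ω).2)
  have hqi : Integrable q P := Integrable.of_bound hqm.aestronglyMeasurable 1
    (.of_forall fun ω => by rw [Real.norm_eq_abs, abs_of_nonneg (hq1 ω).1]; exact (hq1 ω).2)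
  have hDb : ∀ ω, ‖2 * (g ω - q ω)‖ ≤ 2 := fun ω => by
    have := hg1 ω; have := hq1 ω
    simp only [Set.mem_Icc] at *
    rw [Real.norm_eq_abs, abs_le]; constructor <;> linarith
  have hDm : StronglyMeasurable[G] (fun ω => 2 * (g ω - q ω)) :=
    ((hg.sub hq).const_mul 2).stronglyMeasurable
  have hprod : Integrable ((fun ω => 2 * (g ω - q ω)) * (q - r)) P :=
    (hqi.sub hri).bdd_mul (hDm.mono hG).aestronglyMeasurable (.of_forall hDb)
  have hSi : Integrable (fun ω => (g ω - q ω) ^ 2) P :=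
    Integrable.of_bound ((hgm.sub hqm).pow_const 2).aestronglyMeasurable 1
      (.of_forall fun ω => by
        have := hg1 ω; have := hq1 ω
        simp only [Set.mem_Icc] at *
        rw [Real.norm_eq_abs, abs_of_nonneg (sq_nonneg _)]; nlinarith)
  have hzero : P[(fun ω => 2 * (g ω - q ω)) * (q - r) | G] =ᵐ[P] 0 := by
    have h1 := condExp_mul_of_stronglyMeasurable_left hDm hprod (hqi.sub hri)
    have h2 := condExp_sub (m := G) hqi hri
    rw [condExp_of_stronglyMeasurable hG hq.stronglyMeasurable hqi] at h2
    filter_upwards [h1, h2, hmean] with ω g1 g2 g3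
    rw [g1, Pi.mul_apply, g2, Pi.sub_apply, g3]; simp
  have hzero' : P[(fun ω => 2 * (g ω - q ω)) * (q - r) | m] =ᵐ[P] 0 := by
    have h1 := condExp_condExp_of_le (μ := P)
      (f := (fun ω => 2 * (g ω - q ω)) * (q - r)) hmG hG
    have h2 := condExp_congr_ae (m := m) hzero
    rw [condExp_zero] at h2
    exact h1.symm.trans h2
  have e : (fun ω => (g ω - r ω) ^ 2 - (q ω - r ω) ^ 2)
      = (fun ω => (g ω - q ω) ^ 2) + (fun ω => 2 * (g ω - q ω)) * (q - r) := by
    ext ω; simp; ring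
  rw [e]
  filter_upwards [condExp_add (m := m) hSi hprod, hzero'] with ω g1 g2
  rw [g1, Pi.add_apply, g2]; simp

/-- Markov's inequality for the exponential supermartingale. -/
lemma measure_deviation_le (P : Measure Ω) [IsProbabilityMeasure P]
    (H : ℕ → MeasurableSpace Ω) (hH : ∀ n, H n ≤ mΩ) (hmono : Monotone H) (Y S : ℕ → Ω → ℝ)
    (hY : ∀ i, 1 ≤ i → Measurable[H i] (Y i)) (hS : ∀ i, Measurable (S i))
    (hY1 : ∀ i ω, |Y i ω| ≤ 1) (hS0 : ∀ i ω, 0 ≤ S i ω) (hS1 : ∀ i ω, S i ω ≤ 1)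
    (hYS : ∀ i ω, Y i ω ^ 2 ≤ 4 * S i ω)
    (hcond : ∀ i, 1 ≤ i → P[Y i | H (i - 1)] =ᵐ[P] P[S i | H (i - 1)]) (n : ℕ)
    (u : ℝ) (hu : 1 ≤ u) :
    P {ω | 68 * Real.log u + 2 * ∑ i ∈ Finset.Icc 1 n, Y i ω
        < ∑ i ∈ Finset.Icc 1 n, (P[S i | H (i - 1)]) ω} ≤ ENNReal.ofReal (1 / u) := by
  obtain ⟨h1, h2, h3⟩ := integral_exp_sum_le_one P H hH hmono Y S hY hS hY1 hS0 hS1 hYS hcond n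
  have hint : Integrable (fun ω => Real.exp
      (∑ i ∈ Finset.Icc 1 n, ((P[S i | H (i - 1)]) ω / 16 - Y i ω / 8))) P :=
    Integrable.of_bound (h1.mono (hH n) le_rfl).aestronglyMeasurable (Real.exp n) (by
      filter_upwards [h2] with ω h
      rwa [Real.norm_eq_abs, abs_of_pos (Real.exp_pos _)])
  have hmk := mul_meas_ge_le_integral_of_nonneg
    (.of_forall fun ω => (Real.exp_pos _).le) hint u
  have hu0 : 0 < u := by linarith
  have hreal : P.real {ω | u ≤ Real.exp
      (∑ i ∈ Finset.Icc 1 n, ((P[S i | H (i - 1)]) ω / 16 - Y i ω / 8))} ≤ 1 / u := by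
    rw [le_div_iff₀ hu0, mul_comm]; exact hmk.trans h3
  refine (measure_mono ?_).trans
    ((ENNReal.le_ofReal_iff_toReal_le (measure_ne_top _ _) (by positivity)).2 hreal)
  intro ω hω
  simp only [Set.mem_ofPred_eq] at hω ⊢
  rw [← Real.log_le_iff_le_exp hu0, Finset.sum_sub_distrib, ← Finset.sum_div, ← Finset.sum_div]
  have := Real.log_nonneg hu
  linarith

end Aux

lemma tsum_ofReal_inv_cube_le (c : ℝ) (hc : 0 ≤ c) :
    ∑' k : ℕ, ENNReal.ofReal (c / ((k + 2 : ℕ) : ℝ) ^ 3) ≤ ENNReal.ofReal c := by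
  refine ENNReal.tsum_le_of_sum_range_le fun n => ?_
  rw [← ENNReal.ofReal_sum_of_nonneg (fun i _ => by positivity)]
  refine ENNReal.ofReal_le_ofReal ?_
  -- telescoping bound: the partial sums of `1 / t³` are at most `1 - 1 / (n + 1)`
  have h : ∀ n : ℕ, ∑ k ∈ Finset.range n, c / ((k + 2 : ℕ) : ℝ) ^ 3 ≤ c * (1 - 1 / (n + 1)) := by
    intro n
    induction n with
    | zero => simp
    | succ n ih =>
      rw [Finset.sum_range_succ]
      have h2 : 1 / ((n + 2 : ℕ) : ℝ) ^ 3 ≤ 1 / ((n : ℝ) + 1) - 1 / ((n + 1 : ℕ) + 1 : ℝ) := by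
        have e : 1 / ((n : ℝ) + 1) - 1 / ((n + 1 : ℕ) + 1 : ℝ) = 1 / (((n : ℝ) + 1) * (n + 2)) := by
          push_cast; field_simp; ring
        rw [e]
        have hn : (0 : ℝ) ≤ n := n.cast_nonneg
        refine one_div_le_one_div_of_le (by positivity) ?_
        push_cast
        nlinarith [mul_nonneg hn hn, mul_nonneg hn (mul_nonneg hn hn)]
      have h3 := mul_le_mul_of_nonneg_left h2 hc
      have e2 : c / ((n + 2 : ℕ) : ℝ) ^ 3 = c * (1 / ((n + 2 : ℕ) : ℝ) ^ 3) := by ring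
      rw [e2]; linarith
  refine (h n).trans ?_
  have : (0 : ℝ) ≤ 1 / ((n : ℝ) + 1) := by positivity
  nlinarith

/-- **Uniform convergence over all sequences of estimators.**
For an arbitrary (possibly randomized) contextual bandit algorithm and any `δ ∈ (0,1)`, with
probability at least `1 - δ/2`, simultaneously for all `t ≥ 2` and all fixed (deterministic)
sequences `f_2, f_3, ... ∈ F`:
`∑_{i=1}^{t-1} E[(f_t(x_i,a_i) - f*(x_i,a_i))² | H_{i-1}]
  ≤ 68 log(2|F| t³/δ) + 2 ∑_{i=1}^{t-1} [(f_t(x_i,a_i) - r_i)² - (f*(x_i,a_i) - r_i)²]`. -/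
theorem stmt_5
    {Ω X : Type*} [MeasurableSpace Ω] [MeasurableSpace X]
    (P : Measure Ω) [IsProbabilityMeasure P]
    (Dx : Measure X) [IsProbabilityMeasure Dx]
    (K : ℕ) (hK : 1 ≤ K)
    -- finite function class, realizability
    (F : Finset (X → ℕ → ℝ))
    (hFmeas : ∀ f ∈ F, ∀ k, Measurable (fun x' => f x' k))
    (hFrange : ∀ f ∈ F, ∀ x' k, f x' k ∈ Set.Icc (0 : ℝ) 1)
    (fstar : X → ℕ → ℝ) (hfstar : fstar ∈ F)
    -- the stochastic processes of contexts, actions and observed rewards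
    (x : ℕ → Ω → X) (a : ℕ → Ω → ℕ) (r : ℕ → Ω → ℝ)
    (hx_meas : ∀ t, Measurable (x t))
    (ha_meas : ∀ t, Measurable (a t))
    (ha_range : ∀ t ω, 1 ≤ t → a t ω ∈ Finset.Icc 1 K)
    (hr_meas : ∀ t, Measurable (r t))
    (hr_range : ∀ t ω, r t ω ∈ Set.Icc (0 : ℝ) 1)
    -- contexts are i.i.d. with law `Dx`, each independent of the past history
    (hx_law : ∀ t, 1 ≤ t → P.map (x t) = Dx)
    (hx_indep : ∀ t, 1 ≤ t →
      Indep (MeasurableSpace.comap (x t) inferInstance) (histFilt x a r (t - 1)) P)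
    -- realizability: the observed reward has conditional mean `f*(x_t, a_t)` given the
    -- history, the current context and the chosen action
    (hmean : ∀ t, 1 ≤ t →
      P[r t | histFilt x a r (t - 1) ⊔ MeasurableSpace.comap (x t) inferInstance
          ⊔ MeasurableSpace.comap (a t) inferInstance]
        =ᵐ[P] fun ω => fstar (x t ω) (a t ω))
    (δ : ℝ) (hδ : δ ∈ Set.Ioo (0 : ℝ) 1) :
    ENNReal.ofReal (1 - δ / 2) ≤
      P {ω | ∀ fseq : ℕ → X → ℕ → ℝ, (∀ t, fseq t ∈ F) → ∀ t : ℕ, 2 ≤ t →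
        ∑ i ∈ Finset.Icc 1 (t - 1),
            (P[(fun ω' => (fseq t (x i ω') (a i ω') - fstar (x i ω') (a i ω')) ^ 2) |
                histFilt x a r (i - 1)]) ω
          ≤ 68 * Real.log (2 * F.card * t ^ 3 / δ)
            + 2 * ∑ i ∈ Finset.Icc 1 (t - 1),
                ((fseq t (x i ω) (a i ω) - r i ω) ^ 2
                  - (fstar (x i ω) (a i ω) - r i ω) ^ 2)} := by
  obtain ⟨hδ0, hδ1⟩ := hδ
  have hFpos : 0 < F.card := Finset.card_pos.2 ⟨_, hfstar⟩
  have hFc : (1 : ℝ) ≤ F.card := by exact_mod_cast hFpos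
  let H : ℕ → MeasurableSpace Ω := histFilt x a r
  have htriple : ∀ i, Measurable (fun ω => (x i ω, a i ω, r i ω)) := fun i =>
    (hx_meas i).prodMk ((ha_meas i).prodMk (hr_meas i))
  have hH : ∀ n, H n ≤ (inferInstance : MeasurableSpace Ω) := fun n =>
    iSup₂_le fun i _ => (htriple i).comap_le
  have hmono : Monotone H := fun m n hmn =>
    iSup₂_le fun i hi => le_iSup₂_of_le i (Finset.Icc_subset_Icc le_rfl hmn hi) le_rfl
  have hadapt : ∀ i, 1 ≤ i → Measurable[H i] (fun ω => (x i ω, a i ω, r i ω)) := fun i hi =>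
    (comap_measurable _).mono (le_iSup₂_of_le i (Finset.mem_Icc.2 ⟨hi, le_rfl⟩) le_rfl) le_rfl
  have hFm : ∀ f ∈ F, Measurable (fun p : X × ℕ => f p.1 p.2) := fun f hf =>
    measurable_from_prod_countable_left (hFmeas f hf)
  -- deviation bound for one function and one time
  have hdev : ∀ f ∈ F, ∀ t : ℕ, 2 ≤ t →
      P {ω | 68 * Real.log (2 * F.card * t ^ 3 / δ)
            + 2 * ∑ i ∈ Finset.Icc 1 (t - 1),
                ((f (x i ω) (a i ω) - r i ω) ^ 2 - (fstar (x i ω) (a i ω) - r i ω) ^ 2)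
          < ∑ i ∈ Finset.Icc 1 (t - 1),
            (P[(fun ω' => (f (x i ω') (a i ω') - fstar (x i ω') (a i ω')) ^ 2) |
                histFilt x a r (i - 1)]) ω}
        ≤ ENNReal.ofReal (1 / (2 * F.card * t ^ 3 / δ)) := by
    intro f hf t ht
    have ht1 : (1 : ℝ) ≤ t := by exact_mod_cast (by omega : 1 ≤ t)
    have hu : 1 ≤ 2 * F.card * (t : ℝ) ^ 3 / δ := by
      rw [one_le_div hδ0]
      nlinarith [one_le_mul_of_one_le_of_one_le hFc (one_le_pow₀ ht1 (n := 3))]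
    have hgm := hFm f hf
    have hqm := hFm fstar hfstar
    refine measure_deviation_le P H hH hmono
      (fun i ω => (f (x i ω) (a i ω) - r i ω) ^ 2 - (fstar (x i ω) (a i ω) - r i ω) ^ 2)
      (fun i ω => (f (x i ω) (a i ω) - fstar (x i ω) (a i ω)) ^ 2)
      ?_ ?_ ?_ ?_ ?_ ?_ ?_ (t - 1) _ hu
    · intro i hi
      have hφ : Measurable (fun p : X × ℕ × ℝ =>
          (f p.1 p.2.1 - p.2.2) ^ 2 - (fstar p.1 p.2.1 - p.2.2) ^ 2) := by
        have h1 : Measurable (fun p : X × ℕ × ℝ => (p.1, p.2.1)) := by fun_prop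
        have h2 : Measurable (fun p : X × ℕ × ℝ => p.2.2) := by fun_prop
        exact (((hgm.comp h1).sub h2).pow_const 2).sub (((hqm.comp h1).sub h2).pow_const 2)
      exact hφ.comp (hadapt i hi)
    · intro i
      have h1 : Measurable (fun ω => (x i ω, a i ω)) := (hx_meas i).prodMk (ha_meas i)
      exact ((hgm.comp h1).sub (hqm.comp h1)).pow_const 2
    · intro i ω
      obtain ⟨h1, h2⟩ := hFrange f hf (x i ω) (a i ω)
      obtain ⟨h3, h4⟩ := hFrange fstar hfstar (x i ω) (a i ω)
      obtain ⟨h5, h6⟩ := hr_range i ω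
      rw [abs_le]; constructor <;> nlinarith
    · intro i ω; positivity
    · intro i ω
      obtain ⟨h1, h2⟩ := hFrange f hf (x i ω) (a i ω)
      obtain ⟨h3, h4⟩ := hFrange fstar hfstar (x i ω) (a i ω)
      nlinarith
    · intro i ω
      obtain ⟨h1, h2⟩ := hFrange f hf (x i ω) (a i ω)
      obtain ⟨h3, h4⟩ := hFrange fstar hfstar (x i ω) (a i ω)
      obtain ⟨h5, h6⟩ := hr_range i ω
      set p := f (x i ω) (a i ω)
      set q := fstar (x i ω) (a i ω)
      have e : (((p - r i ω) ^ 2 - (q - r i ω) ^ 2)) ^ 2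
          = (p + q - 2 * r i ω) ^ 2 * (p - q) ^ 2 := by ring
      have h7 : (p + q - 2 * r i ω) ^ 2 ≤ 4 := by nlinarith
      rw [e]
      exact mul_le_mul_of_nonneg_right h7 (sq_nonneg _)
    · intro i hi
      have hxa : Measurable[H (i - 1) ⊔ MeasurableSpace.comap (x i) inferInstance
          ⊔ MeasurableSpace.comap (a i) inferInstance] (fun ω => (x i ω, a i ω)) :=
        ((comap_measurable (x i)).mono (le_sup_right.trans le_sup_left) le_rfl).prodMk
          ((comap_measurable (a i)).mono le_sup_right le_rfl)
      exact condExp_excess_loss P (H (i - 1)) _ (le_sup_left.trans le_sup_left)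
        (sup_le (sup_le (hH _) (hx_meas i).comap_le) (ha_meas i).comap_le) _ _ (r i)
        (hgm.comp hxa) (hqm.comp hxa) (hr_meas i)
        (fun ω => hFrange f hf _ _) (fun ω => hFrange fstar hfstar _ _) (hr_range i) (hmean i hi)
  set A : Set Ω := {ω | ∀ fseq : ℕ → X → ℕ → ℝ, (∀ t, fseq t ∈ F) → ∀ t : ℕ, 2 ≤ t →
        ∑ i ∈ Finset.Icc 1 (t - 1),
            (P[(fun ω' => (fseq t (x i ω') (a i ω') - fstar (x i ω') (a i ω')) ^ 2) |
                histFilt x a r (i - 1)]) ω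
          ≤ 68 * Real.log (2 * F.card * t ^ 3 / δ)
            + 2 * ∑ i ∈ Finset.Icc 1 (t - 1),
                ((fseq t (x i ω) (a i ω) - r i ω) ^ 2
                  - (fstar (x i ω) (a i ω) - r i ω) ^ 2)} with hA
  let B : (X → ℕ → ℝ) → ℕ → Set Ω := fun f t =>
    {ω | 68 * Real.log (2 * F.card * t ^ 3 / δ)
            + 2 * ∑ i ∈ Finset.Icc 1 (t - 1),
                ((f (x i ω) (a i ω) - r i ω) ^ 2 - (fstar (x i ω) (a i ω) - r i ω) ^ 2)
          < ∑ i ∈ Finset.Icc 1 (t - 1),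
            (P[(fun ω' => (f (x i ω') (a i ω') - fstar (x i ω') (a i ω')) ^ 2) |
                histFilt x a r (i - 1)]) ω}
  have hsub : Aᶜ ⊆ ⋃ k : ℕ, ⋃ f ∈ F, B f (k + 2) := by
    intro ω hω
    rw [hA, Set.mem_compl_iff, Set.mem_ofPred_eq] at hω
    push Not at hω
    obtain ⟨fseq, hf, t, ht, hlt⟩ := hω
    obtain ⟨k, rfl⟩ := Nat.exists_eq_add_of_le' ht
    exact Set.mem_iUnion.2 ⟨k, Set.mem_iUnion₂.2 ⟨fseq (k + 2), hf _, hlt⟩⟩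
  have hbad : P Aᶜ ≤ ENNReal.ofReal (δ / 2) := by
    refine (measure_mono hsub).trans ((measure_iUnion_le _).trans
      (le_trans (ENNReal.tsum_le_tsum fun k => ?_) (tsum_ofReal_inv_cube_le (δ / 2) (by linarith))))
    refine (measure_biUnion_finset_le _ _).trans
      ((Finset.sum_le_sum fun f hf => hdev f hf (k + 2) (by omega)).trans ?_)
    rw [Finset.sum_const, nsmul_eq_mul, ← ENNReal.ofReal_natCast,
      ← ENNReal.ofReal_mul (by positivity)]
    refine ENNReal.ofReal_le_ofReal (le_of_eq ?_)
    have : (F.card : ℝ) ≠ 0 := by positivity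
    field_simp
  -- subadditivity is used because `A` need not be measurable
  have hone : 1 ≤ P A + P Aᶜ := by
    rw [← measure_univ (μ := P), ← Set.union_compl_self A]
    exact measure_union_le _ _
  rw [ENNReal.ofReal_sub _ (by linarith), ENNReal.ofReal_one, tsub_le_iff_right]
  exact hone.trans (by gcongr)
end

section
/- Let σ : ℝ → ℝ be differentiable with 0 < m ≤ σ'(u) ≤ κ·m for all u ∈ ℝ, where κ ≥ 1. Let φ, φ_1,...,φ_n ∈ ℝ^d with M := Σ_{i=1}^n φ_i φ_iᵀ invertible. Then for all θ₁, θ₂ ∈ ℝ^d: (σ(θ₁ᵀφ) − σ(θ₂ᵀφ))² ≤ κ² (φᵀ M⁻¹ φ) · Σ_{i=1}^n (σ(θ₁ᵀφ_i) − σ(θ₂ᵀφ_i))². (This verifies that V(a‖{a_i}) = κ² φ(x,a)ᵀ(Σ_i φ(x,a_i)φ(x,a_i)ᵀ)⁻¹ φ(x,a) is a proper counterfactual action divergence for the generalized linear action model f(x,a) = σ(g(x)ᵀφ(x,a)).) -/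
/-!
By the mean value theorem each increment `σ s - σ t` equals `q (s - t)` with `m ≤ q ≤ κ m`, so
with `w = θ₁ - θ₂` the left side is at most `κ² m² (wᵀφ)²` and the sum on the right is at least
`m² ∑ᵢ (wᵀφᵢ)²`. It remains to bound the linear model, `(wᵀφ)² ≤ (φᵀM⁻¹φ) ∑ᵢ (wᵀφᵢ)²`
(`sq_dotProduct_le`). Putting `y = M⁻¹φ`, so that `M y = φ`, the bilinear form of `M` gives
`wᵀφ = wᵀM y = ∑ᵢ (wᵀφᵢ)(yᵀφᵢ)` and `φᵀM⁻¹φ = yᵀM y = ∑ᵢ (yᵀφᵢ)²`, and the bound is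
the Cauchy-Schwarz inequality in `ℝⁿ`.
-/

open Matrix

/-- Mean value theorem for a function differentiable on the whole line, with no order or
distinctness assumption on the endpoints. -/
lemma exists_sub_eq_deriv_mul {σ : ℝ → ℝ} (hσ : Differentiable ℝ σ) (s t : ℝ) :
    ∃ c, σ s - σ t = deriv σ c * (s - t) := by
  rcases lt_trichotomy s t with h | h | h
  · obtain ⟨c, -, hc⟩ := exists_deriv_eq_slope σ h hσ.continuous.continuousOn
      hσ.differentiableOn
    refine ⟨c, ?_⟩
    have : t - s ≠ 0 := (sub_pos.2 h).ne'
    rw [eq_div_iff this] at hc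
    linarith
  · exact ⟨0, by simp [h]⟩
  · obtain ⟨c, -, hc⟩ := exists_deriv_eq_slope σ h hσ.continuous.continuousOn
      hσ.differentiableOn
    refine ⟨c, ?_⟩
    have : s - t ≠ 0 := (sub_pos.2 h).ne'
    rw [eq_div_iff this] at hc
    linarith

lemma dotProduct_sum_vecMulVec_mulVec {d n : ℕ} (φs : Fin n → Fin d → ℝ) (u v : Fin d → ℝ) :
    u ⬝ᵥ ((∑ i, Matrix.vecMulVec (φs i) (φs i)) *ᵥ v)
      = ∑ i, (u ⬝ᵥ φs i) * (v ⬝ᵥ φs i) := by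
  rw [Matrix.sum_mulVec, dotProduct_sum]
  refine Finset.sum_congr rfl fun i _ => ?_
  rw [Matrix.vecMulVec_mulVec, dotProduct_comm v]
  simp [mul_comm]

/-- The inequality for the linear model `σ = id`, where `κ = 1`. -/
lemma sq_dotProduct_le {d n : ℕ} (φ : Fin d → ℝ) (φs : Fin n → Fin d → ℝ)
    (M : Matrix (Fin d) (Fin d) ℝ) (hM : M = ∑ i, Matrix.vecMulVec (φs i) (φs i))
    (hinv : IsUnit M.det) (w : Fin d → ℝ) :
    (w ⬝ᵥ φ) ^ 2 ≤ (φ ⬝ᵥ (M⁻¹ *ᵥ φ)) * ∑ i, (w ⬝ᵥ φs i) ^ 2 := by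
  set y := M⁻¹ *ᵥ φ with hy
  have hMy : M *ᵥ y = φ := by
    rw [hy, Matrix.mulVec_mulVec, Matrix.mul_nonsing_inv M hinv, Matrix.one_mulVec]
  have form (u : Fin d → ℝ) : u ⬝ᵥ φ = ∑ i, (u ⬝ᵥ φs i) * (y ⬝ᵥ φs i) := by
    rw [← dotProduct_sum_vecMulVec_mulVec, ← hM, hMy]
  rw [dotProduct_comm φ y, form w, form y, mul_comm]
  simpa only [sq] using Finset.sum_mul_sq_le_sq_mul_sq Finset.univ
    (fun i => w ⬝ᵥ φs i) (fun i => y ⬝ᵥ φs i)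

/-- **Counterfactual action divergence for the generalized linear action model.**
Let `σ : ℝ → ℝ` be differentiable with `0 < m ≤ σ'(u) ≤ κ m` for all `u`, where `κ ≥ 1`.
Let `φ, φ_1, ..., φ_n ∈ ℝ^d` with `M := ∑_i φ_i φ_iᵀ` invertible.  Then for all `θ₁, θ₂`,
`(σ(θ₁ᵀφ) - σ(θ₂ᵀφ))² ≤ κ² (φᵀ M⁻¹ φ) ∑_i (σ(θ₁ᵀφ_i) - σ(θ₂ᵀφ_i))²`. -/
theorem stmt_12 (d n : ℕ) (σ : ℝ → ℝ) (m κ : ℝ) (hκ : 1 ≤ κ) (hm : 0 < m)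
    (hσ : Differentiable ℝ σ)
    (hσ' : ∀ u, m ≤ deriv σ u ∧ deriv σ u ≤ κ * m)
    (φ : Fin d → ℝ) (φs : Fin n → Fin d → ℝ)
    (M : Matrix (Fin d) (Fin d) ℝ)
    (hM : M = ∑ i, Matrix.vecMulVec (φs i) (φs i))
    (hinv : IsUnit M.det)
    (θ₁ θ₂ : Fin d → ℝ) :
    (σ (θ₁ ⬝ᵥ φ) - σ (θ₂ ⬝ᵥ φ)) ^ 2
      ≤ κ ^ 2 * (φ ⬝ᵥ (M⁻¹ *ᵥ φ)) *
          ∑ i, (σ (θ₁ ⬝ᵥ φs i) - σ (θ₂ ⬝ᵥ φs i)) ^ 2 := by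
  have upper (s t : ℝ) : (σ s - σ t) ^ 2 ≤ κ ^ 2 * (m ^ 2 * (s - t) ^ 2) := by
    obtain ⟨c, hc⟩ := exists_sub_eq_deriv_mul hσ s t
    rw [hc, mul_pow, ← mul_assoc, ← mul_pow κ]
    have h0 : 0 ≤ deriv σ c := hm.le.trans (hσ' c).1
    have := (hσ' c).2
    gcongr
  have lower (s t : ℝ) : m ^ 2 * (s - t) ^ 2 ≤ (σ s - σ t) ^ 2 := by
    obtain ⟨c, hc⟩ := exists_sub_eq_deriv_mul hσ s t
    rw [hc, mul_pow]
    have := (hσ' c).1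
    gcongr
  have linear := sq_dotProduct_le φ φs M hM hinv
  -- Nonnegativity of `φᵀM⁻¹φ = yᵀM y` for `y = M⁻¹φ`.
  have hV : 0 ≤ φ ⬝ᵥ (M⁻¹ *ᵥ φ) := by
    have h := dotProduct_sum_vecMulVec_mulVec φs (M⁻¹ *ᵥ φ) (M⁻¹ *ᵥ φ)
    rw [← hM, Matrix.mulVec_mulVec, Matrix.mul_nonsing_inv M hinv, Matrix.one_mulVec,
      dotProduct_comm] at h
    rw [h]
    exact Finset.sum_nonneg fun i _ => mul_self_nonneg _
  calc (σ (θ₁ ⬝ᵥ φ) - σ (θ₂ ⬝ᵥ φ)) ^ 2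
      ≤ κ ^ 2 * (m ^ 2 * ((θ₁ - θ₂) ⬝ᵥ φ) ^ 2) := by
        rw [sub_dotProduct]
        exact upper _ _
    _ ≤ κ ^ 2 * (m ^ 2 * ((φ ⬝ᵥ (M⁻¹ *ᵥ φ)) * ∑ i, ((θ₁ - θ₂) ⬝ᵥ φs i) ^ 2)) := by
        gcongr
        exact linear _
    _ = κ ^ 2 * (φ ⬝ᵥ (M⁻¹ *ᵥ φ)) * ∑ i, m ^ 2 * (θ₁ ⬝ᵥ φs i - θ₂ ⬝ᵥ φs i) ^ 2 := by
        simp only [sub_dotProduct, ← Finset.mul_sum]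
        ring
    _ ≤ _ := by
        gcongr with i
        exact lower _ _
end

section
/- Let A ⊂ ℝ^d be compact and let {A_i}_{i=1}^d ⊆ A be a barycentric spanner of A consisting of linearly independent vectors. Then for every T ≥ 1 and every sequence a_1,...,a_T ∈ A with a_t = A_t for all t ≤ min(d, T): Σ_{t=1}^T min(1, a_tᵀ(Σ_{i=1}^{t−1} a_i a_iᵀ)⁻¹ a_t) ≤ 2 d log T + d, where a summand is taken equal to 1 whenever Σ_{i=1}^{t−1} a_i a_iᵀ is not invertible. -/
/-!
Let `B` be the matrix with columns `A_1, ..., A_d` and put `c_t = B⁻¹ a_t`. The spanner property says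
that all entries of `c_t` lie in `[-1, 1]`, and for `d ≤ T` the `c_1, ..., c_d` are the standard basis. With
`V_t = ∑_{i<t} a_i a_iᵀ` and `W_t = ∑_{i<t} c_i c_iᵀ` one gets `V_t = B W_t Bᵀ` and `W_{d+1} = 1`.

The first `d` summands are at most `1` each. For `t > d`, the matrix determinant lemma
(`one_add_quadForm_inv`) and `min 1 x ≤ 2 log (1 + x)` bound the summand by
`2 (log det V_{t+1} - log det V_t) = 2 (log det W_{t+1} - log det W_t)`. This telescopes to
`2 log det W_{T+1}`, and `tr W_{T+1} ≤ d + (T - d) d ≤ d T` forces `log det W_{T+1} ≤ d log T`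
(`log_det_le`).
-/

open Matrix
open scoped Classical

theorem min_one_le_two_mul_log {x : ℝ} (hx : 0 ≤ x) : min 1 x ≤ 2 * Real.log (1 + x) := by
  have h1 : (0 : ℝ) < 1 + x := by linarith
  have h := Real.one_sub_inv_le_log_of_pos h1
  have h2 : min 1 x ≤ 2 * (1 - (1 + x)⁻¹) := by
    have h3 : 2 * (1 - (1 + x)⁻¹) = 2 * x / (1 + x) := by field_simp; ring
    rw [h3, le_div_iff₀ h1]
    rcases le_total x 1 with h4 | h4
    · rw [min_eq_right h4]; nlinarith
    · rw [min_eq_left h4]; linarith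
  linarith

/-- The matrix determinant lemma, for a symmetric rank-one update. -/
theorem one_add_quadForm_inv {d : ℕ} (V : Matrix (Fin d) (Fin d) ℝ) (u : Fin d → ℝ)
    (hV : IsUnit V.det) :
    (V + vecMulVec u u).det = V.det * (1 + u ⬝ᵥ (V⁻¹ *ᵥ u)) := by
  have h := det_add_replicateCol_mul_replicateRow (ι := Unit) hV u u
  rw [← vecMulVec_eq] at h
  rw [h]
  congr 1
  simp [det_unique, Matrix.mul_apply, dotProduct, mulVec,
    Finset.mul_sum, Finset.sum_mul, mul_assoc]
  exact Finset.sum_comm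

/-- A positive definite matrix of trace at most `d s` has determinant at most `s ^ d`. This is
AM-GM for the eigenvalues, obtained from the tangent line bound `log x ≤ x / s - 1 + log s`. -/
theorem log_det_le {d : ℕ} (W : Matrix (Fin d) (Fin d) ℝ) (hW : W.PosDef) {s : ℝ} (hs : 0 < s)
    (htr : W.trace ≤ d * s) : Real.log W.det ≤ d * Real.log s := by
  have hdet := hW.isHermitian.det_eq_prod_eigenvalues
  have htrace := hW.isHermitian.trace_eq_sum_eigenvalues
  simp only [RCLike.ofReal_real_eq_id, id] at hdet htrace
  rw [hdet, Real.log_prod (fun i _ => (hW.eigenvalues_pos i).ne')]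
  calc ∑ i, Real.log (hW.isHermitian.eigenvalues i)
      ≤ ∑ i, (hW.isHermitian.eigenvalues i / s - 1 + Real.log s) := by
        refine Finset.sum_le_sum fun i _ => ?_
        have hp := hW.eigenvalues_pos i
        have h := Real.log_le_sub_one_of_pos (div_pos hp hs)
        rw [Real.log_div hp.ne' hs.ne'] at h
        linarith
    _ = W.trace / s - d + d * Real.log s := by
        rw [htrace, Finset.sum_add_distrib, Finset.sum_sub_distrib, Finset.sum_div]
        simp
    _ ≤ d * Real.log s := by
        have : W.trace / s ≤ d := (div_le_iff₀ hs).2 htr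
        linarith

theorem posSemidef_vecMulVec_real {d : ℕ} (u : Fin d → ℝ) : (vecMulVec u u).PosSemidef := by
  simpa using posSemidef_vecMulVec_self_star u

/-- The unregularized design matrix `∑_{1 ≤ i < n} x_i x_iᵀ`. -/
noncomputable def designMatrix {d : ℕ} (x : ℕ → Fin d → ℝ) (n : ℕ) : Matrix (Fin d) (Fin d) ℝ :=
  ∑ i ∈ Finset.Ico 1 n, vecMulVec (x i) (x i)

theorem designMatrix_succ {d : ℕ} (x : ℕ → Fin d → ℝ) {n : ℕ} (hn : 1 ≤ n) :
    designMatrix x (n + 1) = designMatrix x n + vecMulVec (x n) (x n) :=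
  Finset.sum_Ico_succ_top hn _

theorem designMatrix_posSemidef {d : ℕ} (x : ℕ → Fin d → ℝ) (n : ℕ) :
    (designMatrix x n).PosSemidef :=
  posSemidef_sum _ fun i _ => posSemidef_vecMulVec_real (x i)

/-- Change of coordinates: determinants of design matrices scale by the constant `det B ^ 2`, so their
ratios do not depend on the basis. -/
theorem designMatrix_mulVec {d : ℕ} (B : Matrix (Fin d) (Fin d) ℝ) (x : ℕ → Fin d → ℝ) (n : ℕ) :
    designMatrix (fun t => B *ᵥ x t) n = B * designMatrix x n * Bᵀ := by
  simp only [designMatrix, Finset.mul_sum, Finset.sum_mul]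
  refine Finset.sum_congr rfl fun i _ => ?_
  rw [mul_vecMulVec, vecMulVec_mul, vecMul_transpose]

theorem designMatrix_basis {d : ℕ} (x : ℕ → Fin d → ℝ)
    (hx : ∀ i : Fin d, x (i + 1) = Pi.single i 1) : designMatrix x (d + 1) = 1 := by
  have h : designMatrix x (d + 1) = ∑ i : Fin d, vecMulVec (x (i + 1)) (x (i + 1)) := by
    rw [designMatrix, Finset.sum_Ico_eq_sum_range,
      Fin.sum_univ_eq_sum_range (fun i => vecMulVec (x (i + 1)) (x (i + 1))) d]
    simp [add_comm]
  rw [h]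
  ext j k
  simp only [hx, Matrix.sum_apply, vecMulVec_apply, Pi.single_apply, Matrix.one_apply]
  simp

theorem designMatrix_posDef {d : ℕ} (x : ℕ → Fin d → ℝ)
    (hx : ∀ i : Fin d, x (i + 1) = Pi.single i 1) {n : ℕ} (hn : d + 1 ≤ n) :
    (designMatrix x n).PosDef := by
  induction n, hn using Nat.le_induction with
  | base => rw [designMatrix_basis x hx]; exact PosDef.one
  | succ n hn ih =>
    rw [designMatrix_succ x (by omega)]
    exact ih.add_posSemidef (posSemidef_vecMulVec_real _)

/-- After the standard basis, each further vector adds its squared norm, at most `d`, to the trace. -/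
theorem designMatrix_trace_le {d : ℕ} (x : ℕ → Fin d → ℝ)
    (hx : ∀ i : Fin d, x (i + 1) = Pi.single i 1) {T : ℕ} (hT : d ≤ T)
    (hb : ∀ t, 1 ≤ t → t ≤ T → ∀ i, |x t i| ≤ 1) :
    (designMatrix x (T + 1)).trace ≤ d + (T - d) * d := by
  induction T, hT using Nat.le_induction with
  | base => rw [designMatrix_basis x hx]; simp
  | succ n hn ih =>
    have h := ih fun t h1 h2 => hb t h1 (by omega)
    have h2 : x (n + 1) ⬝ᵥ x (n + 1) ≤ d := by
      calc x (n + 1) ⬝ᵥ x (n + 1) ≤ ∑ _i : Fin d, (1 : ℝ) := by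
            refine Finset.sum_le_sum fun i _ => ?_
            have := abs_le_one_iff_mul_self_le_one.1 (hb (n + 1) (by omega) le_rfl i)
            exact this
        _ = d := by simp
    rw [designMatrix_succ x (by omega), trace_add, trace_vecMulVec]
    push_cast
    linarith

/-- **Elliptical potential lemma with barycentric-spanner initialization.**
Let `A ⊂ ℝ^d` be compact and `{A_i}_{i=1}^d ⊆ A` a barycentric spanner of `A` consisting
of linearly independent vectors.  Then for every `T ≥ 1` and every sequence
`a_1, ..., a_T ∈ A` with `a_t = A_t` for `t ≤ min d T`,
`∑_{t=1}^T min(1, a_tᵀ (∑_{i<t} a_i a_iᵀ)⁻¹ a_t) ≤ 2 d log T + d`,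
where a summand is taken to be `1` whenever `∑_{i<t} a_i a_iᵀ` is not invertible. -/
theorem stmt_14 (d : ℕ) (A : Set (Fin d → ℝ)) (hcomp : IsCompact A)
    (Av : Fin d → Fin d → ℝ)
    (hAv_mem : ∀ i, Av i ∈ A)
    (hAv_li : LinearIndependent ℝ Av)
    (hspanner : ∀ a ∈ A, ∃ c : Fin d → ℝ, (∀ i, |c i| ≤ 1) ∧ a = ∑ i, c i • Av i)
    (T : ℕ) (hT : 1 ≤ T)
    (a : ℕ → Fin d → ℝ)
    (ha_mem : ∀ t, 1 ≤ t → t ≤ T → a t ∈ A)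
    (ha_init : ∀ t (h1 : 1 ≤ t) (h2 : t ≤ min d T), a t = Av ⟨t - 1, by omega⟩) :
    ∑ t ∈ Finset.Icc 1 T,
        (if IsUnit (∑ i ∈ Finset.Ico 1 t, Matrix.vecMulVec (a i) (a i)).det
          then min 1
            (a t ⬝ᵥ ((∑ i ∈ Finset.Ico 1 t, Matrix.vecMulVec (a i) (a i))⁻¹ *ᵥ a t))
          else 1)
      ≤ 2 * d * Real.log T + d := by
  -- Coordinates with respect to the spanner.
  set B : Matrix (Fin d) (Fin d) ℝ := (Matrix.of Av)ᵀ with hB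
  have hBu : IsUnit B.det := by
    rw [hB, det_transpose, ← isUnit_iff_isUnit_det]
    exact linearIndependent_rows_iff_isUnit.1 hAv_li
  have hBmul : ∀ c : Fin d → ℝ, ∑ i, c i • Av i = B *ᵥ c := by
    intro c
    ext j
    simp [hB, mulVec, dotProduct, mul_comm]
  set c : ℕ → Fin d → ℝ := fun t => B⁻¹ *ᵥ a t with hc
  have hac : a = fun t => B *ᵥ c t := by
    funext t
    simp [hc, mulVec_mulVec, mul_nonsing_inv _ hBu]
  have hcb : ∀ t, 1 ≤ t → t ≤ T → ∀ i, |c t i| ≤ 1 := by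
    intro t h1 h2
    obtain ⟨c', hc', h⟩ := hspanner _ (ha_mem t h1 h2)
    have : c t = c' := by
      simp only [hc]
      rw [h, hBmul, mulVec_mulVec, nonsing_inv_mul _ hBu, one_mulVec]
    rwa [this]
  change ∑ t ∈ Finset.Icc 1 T, (if IsUnit (designMatrix a t).det
    then min 1 (a t ⬝ᵥ ((designMatrix a t)⁻¹ *ᵥ a t)) else 1) ≤ _
  set f : ℕ → ℝ := fun t => if IsUnit (designMatrix a t).det
    then min 1 (a t ⬝ᵥ ((designMatrix a t)⁻¹ *ᵥ a t)) else 1 with hf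
  have hf1 : ∀ t, f t ≤ 1 := by
    intro t
    simp only [hf]
    split_ifs
    · exact min_le_left _ _
    · exact le_rfl
  have hT1 : (1 : ℝ) ≤ T := by exact_mod_cast hT
  have hlog : 0 ≤ 2 * (d : ℝ) * Real.log T :=
    mul_nonneg (by positivity) (Real.log_nonneg hT1)
  -- If `T ≤ d`, bounding every summand by `1` already suffices.
  rcases le_total T d with hTd | hTd
  · have h1 : ∑ t ∈ Finset.Icc 1 T, f t ≤ T := by
      refine (Finset.sum_le_sum fun t _ => hf1 t).trans ?_
      simp
    have h2 : (T : ℝ) ≤ d := by exact_mod_cast hTd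
    linarith
  have hbasis : ∀ i : Fin d, c (i + 1) = Pi.single i 1 := by
    intro i
    have h := ha_init (i + 1) (by omega) (by have := i.2; omega)
    have h2 : Av i = B *ᵥ Pi.single i 1 := by
      ext j
      simp [hB]
    simp only [hc]
    rw [h]
    simp only [Nat.add_sub_cancel, Fin.eta]
    rw [h2, mulVec_mulVec, nonsing_inv_mul _ hBu, one_mulVec]
  have hVdet : ∀ n, (designMatrix a n).det = B.det ^ 2 * (designMatrix c n).det := by
    intro n
    rw [hac, designMatrix_mulVec, det_mul, det_mul, det_transpose B]
    ring
  have hstep : ∀ t, d + 1 ≤ t → f t ≤ 2 * (Real.log (designMatrix c (t + 1)).det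
      - Real.log (designMatrix c t).det) := by
    intro t ht
    have hp := (designMatrix_posDef c hbasis ht).det_pos
    have hp' := (designMatrix_posDef c hbasis (n := t + 1) (by omega)).det_pos
    have hB2 : B.det ≠ 0 := hBu.ne_zero
    have hu : IsUnit (designMatrix a t).det := by
      rw [hVdet]
      exact (mul_ne_zero (pow_ne_zero 2 hB2) hp.ne').isUnit
    have hx : 0 ≤ a t ⬝ᵥ ((designMatrix a t)⁻¹ *ᵥ a t) := by
      simpa using (designMatrix_posSemidef a t).inv.dotProduct_mulVec_nonneg (a t)
    have hdet := one_add_quadForm_inv _ (a t) hu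
    rw [← designMatrix_succ a (by omega), hVdet, hVdet t, mul_assoc] at hdet
    have hdet := mul_left_cancel₀ (pow_ne_zero 2 hB2) hdet
    simp only [hf, if_pos hu]
    refine (min_one_le_two_mul_log hx).trans_eq ?_
    rw [hdet, Real.log_mul hp.ne' (by linarith)]
    ring
  have hsplit : ∑ t ∈ Finset.Icc 1 T, f t
      = ∑ t ∈ Finset.Ico 1 (d + 1), f t + ∑ t ∈ Finset.Ico (d + 1) (T + 1), f t := by
    rw [Finset.sum_Ico_consecutive _ (by omega) (by omega), Finset.Ico_add_one_right_eq_Icc]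
  have hfirst : ∑ t ∈ Finset.Ico 1 (d + 1), f t ≤ d := by
    refine (Finset.sum_le_sum fun t _ => hf1 t).trans ?_
    simp
  have hsecond : ∑ t ∈ Finset.Ico (d + 1) (T + 1), f t
      ≤ 2 * Real.log (designMatrix c (T + 1)).det := by
    refine (Finset.sum_le_sum fun t ht => hstep t (Finset.mem_Ico.1 ht).1).trans_eq ?_
    rw [← Finset.mul_sum, Finset.sum_Ico_sub (fun t => Real.log (designMatrix c t).det)
      (by omega), designMatrix_basis c hbasis]
    simp
  have htr : (designMatrix c (T + 1)).trace ≤ d * T := by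
    refine (designMatrix_trace_le c hbasis hTd hcb).trans ?_
    -- `d + (T - d) d ≤ d T` amounts to `d ≤ d ^ 2`, which holds for every natural number.
    have h : (d : ℝ) ≤ d * d := by exact_mod_cast Nat.le_mul_self d
    linarith
  have hfinal := log_det_le _ (designMatrix_posDef c hbasis (n := T + 1) (by omega))
    (by linarith : (0 : ℝ) < T) htr
  rw [hsplit]
  linarith
end
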